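/- arXiv:1603.00454 — 4 statements merged into one kernel-verified Lean document; each statement's English description precedes it below -/
import Mathlib

section
/- If A ⊆ Z is an infinite subset definable in (Z,+,<,0) that is bounded above or bounded below, then ℕ is definable (with parameters) in the structure (Z,+,0,A). -/
open FirstOrder

/-- Function symbols of the language of `(ℤ,+,0)`: one constant (`0`) and one binary function
(`+`). -/
def grpFunc : ℕ → Type
  | 0 => Unit
  | 2 => Unit
  | _ => Empty

/-- The language of `(ℤ,+,0)`. -/
def LangGrp : FirstOrder.Language := ⟨grpFunc, fun _ => Empty⟩

noncomputable instance : LangGrp.Structure ℤ where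
  funMap {n} f x :=
    match n, f with
    | 0, _ => 0
    | 2, _ => x 0 + x 1
  RelMap {n} r _ := r.elim

/-- The language of `(ℤ,+,<,0)`. -/
def LangOrdGrp : FirstOrder.Language := LangGrp.sum FirstOrder.Language.order

noncomputable instance : FirstOrder.Language.order.Structure ℤ :=
  FirstOrder.Language.orderStructure ℤ

noncomputable instance : LangOrdGrp.Structure ℤ :=
  inferInstanceAs ((LangGrp.sum FirstOrder.Language.order).Structure ℤ)

/-- Presburger sets: subsets of `ℤⁿ` definable with parameters in `(ℤ,+,<,0)`. -/
def IsPresburger {n : ℕ} (s : Set ((Fin n) → ℤ)) : Prop :=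
  Set.Definable (Set.univ : Set ℤ) LangOrdGrp s

/-- Definability with parameters in `(ℤ,+,0)`. -/
def IsGroupDefinable {n : ℕ} (s : Set ((Fin n) → ℤ)) : Prop :=
  Set.Definable (Set.univ : Set ℤ) LangGrp s

/-- The language of `(ℤ,+,0,A)` with `A` an `n`-ary predicate. -/
def LangGrpRel (n : ℕ) : FirstOrder.Language :=
  ⟨grpFunc, fun m => if m = n then Unit else Empty⟩

/-- The structure `(ℤ,+,0,A)`. -/
noncomputable def relStructure {n : ℕ} (A : Set (Fin n → ℤ)) : (LangGrpRel n).Structure ℤ where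
  funMap {m} f x :=
    match m, f with
    | 0, _ => 0
    | 2, _ => x 0 + x 1
  RelMap {m} _ x := if h : m = n then (fun i : Fin n => x (Fin.cast h.symm i)) ∈ A else False

/-- `A ⊆ ℤⁿ` defines the ordering if `ℕ` (the set of nonnegative integers) is definable with
parameters in the expansion `(ℤ,+,0,A)`. -/
def DefinesOrdering {n : ℕ} (A : Set (Fin n → ℤ)) : Prop :=
  letI := relStructure A
  Set.Definable (Set.univ : Set ℤ) (LangGrpRel n) {f : Fin 1 → ℤ | 0 ≤ f 0}

/-- A subset of `ℤ` is Presburger if the corresponding unary set is definable in `(ℤ,+,<,0)`. -/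
def IsPresburger1 (A : Set ℤ) : Prop := IsPresburger {f : Fin 1 → ℤ | f 0 ∈ A}

/-- A subset of `ℤ` is definable in `(ℤ,+,0)`. -/
def IsGroupDefinable1 (A : Set ℤ) : Prop := IsGroupDefinable {f : Fin 1 → ℤ | f 0 ∈ A}

/-- A subset of `ℤ` defines the ordering. -/
def DefinesOrdering1 (A : Set ℤ) : Prop := DefinesOrdering {f : Fin 1 → ℤ | f 0 ∈ A}

/-!
Semilinear sets (finite unions of translates of finitely generated submonoids) are closed under
Boolean operations and projections, so every subset of `ℤ` definable in `(ℤ,+,<,0)` is semilinear.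
An infinite semilinear set `A` contains an infinite translate of a submonoid, hence a progression
`a + n p` (`n ≥ 0`) with `p ≠ 0`. So `{x | a + x p ∈ A}`, which is definable in `(ℤ,+,0,A)`,
contains `ℕ`; as `A` is bounded on one side, this set contains only finitely many negative integers,
and these can be removed using parameters.
-/

open Set FirstOrder.Language

theorem isSemilinearSet_preimage_affineMap {M N : Type*} [AddCommGroup M] [AddCommGroup N]
    [AddMonoid.FG M] {s : Set N} (hs : IsSemilinearSet s) (f : M →ᵃ[ℤ] N) :
    IsSemilinearSet (f ⁻¹' s) := by
  convert! (hs.vadd (-f 0)).preimage f.linear using 1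
  ext x
  have hfx : f x = f 0 + f.linear x := by rw [add_comm]; exact congrFun f.decomp x
  rw [mem_preimage, mem_preimage, mem_vadd_set_iff_neg_vadd_mem, neg_neg, vadd_eq_add, hfx]

theorem isSemilinearSet_forall_snoc {M α : Type*} [AddCommGroup M] [AddMonoid.FG M] [Finite α]
    {n : ℕ} {P : (α → M) → (Fin (n + 1) → M) → Prop}
    (hP : IsSemilinearSet {v : α ⊕ Fin (n + 1) → M | P (v ∘ Sum.inl) (v ∘ Sum.inr)}) :
    IsSemilinearSet {v : α ⊕ Fin n → M | ∀ x, P (v ∘ Sum.inl) (Fin.snoc (v ∘ Sum.inr) x)} := by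
  let restrict : (α ⊕ Fin (n + 1) → M) →ₗ[ℤ] (α ⊕ Fin n → M) :=
    LinearMap.funLeft ℤ M (Sum.map id Fin.castSucc)
  convert! (hP.compl.image restrict).compl using 1
  ext v
  simp only [mem_ofPred_eq, mem_compl_iff, mem_image, not_exists, not_and]
  constructor
  · rintro h w hw rfl
    refine hw ?_
    convert! h (w (Sum.inr (Fin.last n))) using 1
    exact (Fin.snoc_init_self (w ∘ Sum.inr)).symm
  · intro h x
    by_contra hx
    refine h (Sum.elim (v ∘ Sum.inl) (Fin.snoc (v ∘ Sum.inr) x)) hx ?_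
    ext (i | i)
    · rfl
    · exact Fin.snoc_castSucc (α := fun _ => M) x (v ∘ Sum.inr) i

theorem isSemilinearSet_int_Ici_zero : IsSemilinearSet (Ici (0 : ℤ)) := by
  convert! (IsSemilinearSet.univ (M := ℕ)).image (Nat.castAddMonoidHom ℤ) using 1
  ext x
  simp

theorem exists_ne_zero_add_nsmul_mem_of_isLinearSet {M : Type*} [AddCommMonoid M] {s : Set M}
    (hs : IsLinearSet s) (hinf : s.Infinite) : ∃ a, ∃ p ≠ 0, ∀ n : ℕ, a + n • p ∈ s := by
  obtain ⟨a, t, -, rfl⟩ := hs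
  have ht : ¬ t ⊆ {0} := fun h => hinf <| by
    have hbot : AddSubmonoid.closure t = ⊥ := le_bot_iff.1 (AddSubmonoid.closure_le.2 h)
    simp [hbot]
  obtain ⟨p, hpt, hp⟩ := not_subset.1 ht
  exact ⟨a, p, hp, fun n => vadd_mem_vadd_set
    (AddSubmonoid.nsmul_mem _ (AddSubmonoid.subset_closure hpt) n)⟩

theorem exists_ne_zero_add_nsmul_mem_of_isSemilinearSet {M : Type*} [AddCommMonoid M]
    {s : Set M} (hs : IsSemilinearSet s) (hinf : s.Infinite) :
    ∃ a, ∃ p ≠ 0, ∀ n : ℕ, a + n • p ∈ s := by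
  obtain ⟨S, hS, hlin, rfl⟩ := hs
  obtain ⟨t, htS, ht⟩ : ∃ t ∈ S, t.Infinite := by
    contrapose! hinf
    exact hS.sUnion hinf
  obtain ⟨a, p, hp, hap⟩ := exists_ne_zero_add_nsmul_mem_of_isLinearSet (hlin t htS) ht
  exact ⟨a, p, hp, fun n => mem_sUnion_of_mem (hap n) htS⟩

/-- An `L`-structure on an additive group whose function symbols are interpreted by affine maps and
whose relation symbols are interpreted by semilinear sets. Definable sets of such a structure are
semilinear when the group is finitely generated. -/
class IsSemilinearStructure (L : FirstOrder.Language) (M : Type*) [AddCommGroup M]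
    [L.Structure M] : Prop where
  exists_affineMap_eq_funMap : ∀ {n : ℕ} (f : L.Functions n),
    ∃ g : (Fin n → M) →ᵃ[ℤ] M, ⇑g = Structure.funMap f
  isSemilinearSet_relMap : ∀ {n : ℕ} (R : L.Relations n),
    IsSemilinearSet {x : Fin n → M | Structure.RelMap R x}

namespace IsSemilinearStructure

variable {L L' : FirstOrder.Language} {M : Type*} [AddCommGroup M] [L.Structure M] [L'.Structure M]

instance sum [IsSemilinearStructure L M] [IsSemilinearStructure L' M] :
    IsSemilinearStructure (L.sum L') M where
  exists_affineMap_eq_funMap := by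
    rintro n (f | f)
    exacts [exists_affineMap_eq_funMap f, exists_affineMap_eq_funMap f]
  isSemilinearSet_relMap := by
    rintro n (R | R)
    exacts [isSemilinearSet_relMap R, isSemilinearSet_relMap R]

instance constantsOn (A : Set M) : IsSemilinearStructure (constantsOn A) M where
  exists_affineMap_eq_funMap := by
    rintro (_ | n) c
    exacts [⟨AffineMap.const ℤ _ (c : A), rfl⟩, isEmptyElim c]
  isSemilinearSet_relMap R := isEmptyElim R

instance withConstants [IsSemilinearStructure L M] (A : Set M) : IsSemilinearStructure (L[[A]]) M :=
  inferInstanceAs (IsSemilinearStructure (L.sum (Language.constantsOn A)) M)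

theorem exists_affineMap_eq_realize [IsSemilinearStructure L M] {α : Type*} (t : L.Term α) :
    ∃ g : (α → M) →ᵃ[ℤ] M, ⇑g = fun v => t.realize v := by
  induction t with
  | var i => exact ⟨(LinearMap.proj i).toAffineMap, rfl⟩
  | func f ts ih =>
    choose g hg using ih
    obtain ⟨F, hF⟩ := exists_affineMap_eq_funMap (M := M) f
    refine ⟨F.comp (AffineMap.pi g), funext fun v => ?_⟩
    simp only [AffineMap.comp_apply, hF, Term.realize]
    exact congrArg _ (funext fun i => congrFun (hg i) v)

variable [AddMonoid.FG M] [IsSemilinearStructure L M] {α : Type*} [Finite α]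

theorem isSemilinearSet_realize_equal (t₁ t₂ : L.Term α) :
    IsSemilinearSet {v : α → M | t₁.realize v = t₂.realize v} := by
  obtain ⟨g₁, hg₁⟩ := exists_affineMap_eq_realize (M := M) t₁
  obtain ⟨g₂, hg₂⟩ := exists_affineMap_eq_realize (M := M) t₂
  convert! isSemilinearSet_preimage_affineMap (.singleton 0) (g₁ - g₂) using 1
  ext v
  simp [hg₁, hg₂, sub_eq_zero]

theorem isSemilinearSet_realize_rel {n : ℕ} (R : L.Relations n) (ts : Fin n → L.Term α) :
    IsSemilinearSet {v : α → M | Structure.RelMap R fun i => (ts i).realize v} := by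
  choose g hg using fun i => exists_affineMap_eq_realize (M := M) (ts i)
  convert! isSemilinearSet_preimage_affineMap (isSemilinearSet_relMap (M := M) R)
    (AffineMap.pi g) using 1
  ext v
  have hgv : AffineMap.pi g v = fun i => (ts i).realize v := funext fun i => congrFun (hg i) v
  rw [mem_preimage, hgv]
  rfl

theorem isSemilinearSet_boundedFormula_realize {n : ℕ} (φ : L.BoundedFormula α n) :
    IsSemilinearSet {v : α ⊕ Fin n → M | φ.Realize (v ∘ Sum.inl) (v ∘ Sum.inr)} := by
  induction φ with simp only [BoundedFormula.Realize, Sum.elim_comp_inl_inr]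
  | falsum => exact .empty
  | equal t₁ t₂ => exact isSemilinearSet_realize_equal t₁ t₂
  | rel R ts => exact isSemilinearSet_realize_rel R ts
  | imp _ _ ih₁ ih₂ =>
    convert! ih₁.compl.union ih₂ using 1
    ext v
    exact imp_iff_not_or
  | all _ ih => exact isSemilinearSet_forall_snoc ih

theorem isSemilinearSet_of_definable {A : Set M} {s : Set (α → M)} (hs : A.Definable L s) :
    IsSemilinearSet s := by
  obtain ⟨φ, rfl⟩ := hs
  let extend : (α → M) →ₗ[ℤ] (α ⊕ Fin 0 → M) := LinearMap.funLeft ℤ M (Equiv.sumEmpty α (Fin 0))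
  convert! (isSemilinearSet_boundedFormula_realize φ).preimage extend using 1
  ext v
  exact iff_of_eq (congrArg (BoundedFormula.Realize φ v) (Subsingleton.elim _ _))

theorem isSemilinearSet_of_definable₁ {A s : Set M} (hs : A.Definable₁ L s) :
    IsSemilinearSet s :=
  (isSemilinearSet_of_definable hs).preimage (LinearMap.pi fun _ : Fin 1 => LinearMap.id (R := ℤ))

end IsSemilinearStructure

instance : IsSemilinearStructure LangGrp ℤ where
  exists_affineMap_eq_funMap {n} f :=
    match n, f with
    | 0, _ => ⟨0, rfl⟩
    | 2, _ => ⟨(LinearMap.proj (R := ℤ) (φ := fun _ : Fin 2 => ℤ) 0 +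
        LinearMap.proj 1).toAffineMap, rfl⟩
  isSemilinearSet_relMap R := R.elim

instance : IsSemilinearStructure FirstOrder.Language.order ℤ where
  exists_affineMap_eq_funMap f := f.elim
  isSemilinearSet_relMap := by
    rintro _ ⟨⟩
    convert! isSemilinearSet_int_Ici_zero.preimage
      (LinearMap.proj (R := ℤ) (φ := fun _ : Fin 2 => ℤ) 1 - LinearMap.proj 0) using 1
    ext x
    exact (sub_nonneg (a := x 1) (b := x 0)).symm

instance : IsSemilinearStructure LangOrdGrp ℤ :=
  inferInstanceAs (IsSemilinearStructure (LangGrp.sum FirstOrder.Language.order) ℤ)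

section DefinableFun

variable {L : FirstOrder.Language} {M : Type*} [AddGroup M] [L.Structure M] {A : Set M}
  {α : Type*} {f g : (α → M) → M}

theorem definableFun_add (hadd : A.DefinableFun L fun v : Fin 2 → M => v 0 + v 1)
    (hf : A.DefinableFun L f) (hg : A.DefinableFun L g) :
    A.DefinableFun L fun v => f v + g v :=
  hadd.comp (g := fun v => ![f v, g v]) (Fin.forall_fin_two.2 ⟨hf, hg⟩)

theorem definableFun_sub (hadd : A.DefinableFun L fun v : Fin 2 → M => v 0 + v 1)
    (hf : A.DefinableFun L f) (hg : A.DefinableFun L g) :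
    A.DefinableFun L fun v => f v - g v := by
  have hcomp {h : (α → M) → M} (hh : A.DefinableFun L h) :
      A.DefinableFun L fun w : Option α → M => h (w ∘ some) :=
    hh.preimage_comp (Option.map some)
  have hgraph : A.Definable L {w : Option α → M | w none + g (w ∘ some) = f (w ∘ some)} :=
    (definableFun_add hadd (.proj L) (hcomp hg)).ofPred_eq (hcomp hf)
  rw [DefinableFun]
  convert! hgraph using 1
  ext w
  exact sub_eq_iff_eq_add.trans eq_comm

theorem definableFun_zsmul (hadd : A.DefinableFun L fun v : Fin 2 → M => v 0 + v 1)
    (hf : A.DefinableFun L f) (n : ℤ) : A.DefinableFun L fun v => n • f v := by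
  induction n with
  | zero => simpa using definableFun_sub hadd hf hf
  | succ n ih => simpa only [add_one_zsmul] using definableFun_add hadd ih hf
  | pred n ih => simpa only [sub_one_zsmul, ← sub_eq_add_neg] using definableFun_sub hadd ih hf

end DefinableFun

theorem definable₁_of_finite {L : FirstOrder.Language} {M : Type*} [L.Structure M] {A s : Set M}
    (hs : s.Finite) (hsA : s ⊆ A) : A.Definable₁ L s := by
  induction s, hs using Set.Finite.induction_on with
  | empty => exact definable_empty
  | insert _ _ ih =>
    rw [insert_subset_iff] at hsA
    exact (Definable.singleton_of_mem L hsA.1).union (ih hsA.2)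

section Integer

variable {A : Set ℤ} {a p : ℤ}

theorem finite_neg_add_zsmul_mem_of_bddBelow (hp : p ≠ 0) (hprog : ∀ n : ℕ, a + n • p ∈ A)
    (hA : BddBelow A) : {x : ℤ | a + x • p ∈ A ∧ x < 0}.Finite := by
  obtain ⟨b, hb⟩ := hA
  have hp_pos : 0 < p := by
    by_contra! hp_nonpos
    have hlow : b ≤ a + (a - b + 1).toNat • p := hb (hprog _)
    rw [nsmul_eq_mul] at hlow
    nlinarith [Int.self_le_toNat (a - b + 1), hp_nonpos.lt_of_ne hp]
  refine (finite_Ico (b - a) 0).subset fun x ⟨hxA, hx⟩ => ⟨?_, hx⟩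
  have hlow : b ≤ a + x • p := hb hxA
  rw [smul_eq_mul] at hlow
  nlinarith

theorem finite_neg_add_zsmul_mem (hp : p ≠ 0) (hprog : ∀ n : ℕ, a + n • p ∈ A)
    (hA : BddAbove A ∨ BddBelow A) : {x : ℤ | a + x • p ∈ A ∧ x < 0}.Finite := by
  rcases hA with hA | hA
  · have hneg (x : ℤ) : -(-a + x • -p) = a + x • p := by rw [smul_neg]; abel
    simpa only [mem_neg, hneg] using finite_neg_add_zsmul_mem_of_bddBelow (neg_ne_zero.2 hp)
      (A := -A) (a := -a) (fun n => by simpa [add_comm] using hprog n) hA.neg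
  · exact finite_neg_add_zsmul_mem_of_bddBelow hp hprog hA

theorem definable₁_Ici_zero_of_isSemilinearSet {L : FirstOrder.Language} [L.Structure ℤ]
    (hadd : (univ : Set ℤ).DefinableFun L fun v : Fin 2 → ℤ => v 0 + v 1)
    (hdef : (univ : Set ℤ).Definable₁ L A) (hA : IsSemilinearSet A) (hinf : A.Infinite)
    (hbdd : BddAbove A ∨ BddBelow A) : (univ : Set ℤ).Definable₁ L (Ici 0) := by
  obtain ⟨a, p, hp, hprog⟩ := exists_ne_zero_add_nsmul_mem_of_isSemilinearSet hA hinf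
  have hprog_def : (univ : Set ℤ).Definable₁ L {x | a + x • p ∈ A} :=
    hdef.preimage_map (F := fun v _ => a + v 0 • p) fun _ => definableFun_add hadd
      (L.definableFun_const _ (mem_univ a)) (by
        simpa only [smul_eq_mul, mul_comm] using definableFun_zsmul hadd (.proj L) p)
  have hneg_def : (univ : Set ℤ).Definable₁ L {x | a + x • p ∈ A ∧ x < 0} :=
    definable₁_of_finite (finite_neg_add_zsmul_mem hp hprog hbdd) (subset_univ _)
  rw [Definable₁]
  convert! hprog_def.sdiff hneg_def using 1
  ext v
  have hnonneg : 0 ≤ v 0 → a + v 0 • p ∈ A := fun hv => by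
    simpa [Int.toNat_of_nonneg hv] using hprog (v 0).toNat
  simp only [mem_ofPred_eq, mem_Ici, mem_sdiff, not_and, not_lt]
  exact ⟨fun hv => ⟨hnonneg hv, fun _ => hv⟩, fun hv => hv.2 hv.1⟩

end Integer

section RelStructure

variable {n : ℕ} (A : Set (Fin n → ℤ)) (B : Set ℤ)

theorem definableFun_add_relStructure :
    letI := relStructure A
    B.DefinableFun (LangGrpRel n) fun v : Fin 2 → ℤ => v 0 + v 1 :=
  letI := relStructure A
  .of_empty (DefinableFun.fun_symbol (L := LangGrpRel n) (M := ℤ) (n := 2) ())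

theorem definable_relStructure :
    letI := relStructure A
    B.Definable (LangGrpRel n) A := by
  let := relStructure A
  refine .mono (empty_definable_iff.2 ⟨Relations.formula (L := LangGrpRel n) (n := n)
    (cast (if_pos rfl).symm ()) fun i => Term.var i, ?_⟩) (empty_subset B)
  ext v
  rw [mem_ofPred_eq, Formula.realize_rel]
  change _ ↔ if h : n = n then (fun i => v (Fin.cast h.symm i)) ∈ A else False
  simp

end RelStructure

/-- an infinite Presburger subset of `ℤ` which is bounded above or below defines
the ordering. -/
theorem stmt1 (A : Set ℤ) (hA : IsPresburger1 A) (hinf : A.Infinite)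
    (hbdd : BddAbove A ∨ BddBelow A) : DefinesOrdering1 A := by
  let := relStructure {f : Fin 1 → ℤ | f 0 ∈ A}
  exact definable₁_Ici_zero_of_isSemilinearSet (definableFun_add_relStructure _ _)
    (definable_relStructure _ _) (IsSemilinearStructure.isSemilinearSet_of_definable₁ hA) hinf hbdd
end

section
/- Every nonempty subset of Z^n definable in (Z,+,0) can be written as a finite union of quasi-cosets, where a quasi-coset of rank k is a set of the form C \ Z with C a coset of a rank-k subgroup of Z^n and Z ⊆ C a (Z,+,0)-definable set of rank strictly less than k. -/
open FirstOrder

/-- A coset of a subgroup of `ℤⁿ`. -/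
def IsCoset {n : ℕ} (S : Set (Fin n → ℤ)) : Prop :=
  ∃ (a : Fin n → ℤ) (H : AddSubgroup (Fin n → ℤ)), S = (a + ·) '' (H : Set (Fin n → ℤ))

/-- A coset of a rank-`k` subgroup of `ℤⁿ`. -/
def IsCosetOfRank {n : ℕ} (k : ℕ) (S : Set (Fin n → ℤ)) : Prop :=
  ∃ (a : Fin n → ℤ) (H : AddSubgroup (Fin n → ℤ)),
    Module.finrank ℤ H = k ∧ S = (a + ·) '' (H : Set (Fin n → ℤ))

/-- `X` is contained in a finite union of cosets of subgroups of rank at most `k`. -/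
def CoveredByRank {n : ℕ} (X : Set (Fin n → ℤ)) (k : ℕ) : Prop :=
  ∃ (m : ℕ) (C : Fin m → Set (Fin n → ℤ)),
    (∀ i, ∃ ki ≤ k, IsCosetOfRank ki (C i)) ∧ X ⊆ ⋃ i, C i

open Classical in
/-- The rank of a subset of `ℤⁿ`: the least `k` such that `X` is covered by finitely many cosets
of rank at most `k`, with `rk(∅) = -1`. -/
noncomputable def setRank {n : ℕ} (X : Set (Fin n → ℤ)) : ℤ :=
  if X = ∅ then -1 else ((sInf {k : ℕ | CoveredByRank X k} : ℕ) : ℤ)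

/-- A quasi-coset of rank `k` in `ℤⁿ`: a coset of a rank-`k` subgroup minus a `(ℤ,+,0)`-definable
subset of rank `< k`. -/
def IsQuasiCoset {n : ℕ} (k : ℕ) (Q : Set (Fin n → ℤ)) : Prop :=
  ∃ C Z : Set (Fin n → ℤ), IsCosetOfRank k C ∧ Z ⊆ C ∧ IsGroupDefinable Z ∧
    setRank Z < (k : ℤ) ∧ Q = C \ Z

/-!
Up to passing to finite unions, a difference `s \ ⋃ t ∈ F, t` of cosets may be assumed *saturated*:
replacing `s` by the finitely many cosets of `m • H` in it, where `H` is its direction and `m` kills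
the torsion of the quotients by the directions of members of `F`, no direction in `F` meets that of
`s` in a proper subgroup of finite index. By B. H. Neumann's lemma, a coset `s` covered by such an
`F` lies in a single member of `F`. Applied to the fibres of a homomorphism `f`, this writes
`f '' (s \ ⋃ t ∈ F, t)` as `f '' s` minus finitely many cosets, so Boolean combinations of cosets
are stable under projection and hence are exactly the definable sets. Finally, if a saturated
difference is nonempty, no `t ∈ F` meeting `s` contains it, so each `s ⊓ t` has smaller rank than
`s` and the difference is a quasi-coset.
-/

section SaturatedIn

open Pointwise

variable {R M : Type*} [CommRing R] [AddCommGroup M] [Module R M]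

/-- `L` is saturated in `H` when `H ⧸ (H ⊓ L)` is torsion-free; `L` need not lie in `H`. Then either
`H ≤ L` or `H ⊓ L` has smaller rank, with no intermediate case of finite index. -/
def SaturatedIn (L H : Submodule R M) : Prop :=
  ∀ ⦃r : R⦄, r ≠ 0 → ∀ ⦃x : M⦄, x ∈ H → r • x ∈ L → x ∈ L

theorem SaturatedIn.mono {L H K : Submodule R M} (h : SaturatedIn L H) (hK : K ≤ H) :
    SaturatedIn L K :=
  fun _ hr _ hx => h hr (hK hx)

variable [IsDomain R]

theorem exists_ne_zero_smul_mem_of_smul_mem [IsNoetherianRing R] [Module.Finite R M]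
    (L : Submodule R M) :
    ∃ m : R, m ≠ 0 ∧ ∀ r : R, r ≠ 0 → ∀ x : M, r • x ∈ L → m • x ∈ L := by
  obtain ⟨m, hm, hm₀⟩ := Submodule.annihilator_top_inter_nonZeroDivisors
    (Submodule.torsion_isTorsion (R := R) (M := M ⧸ L))
  refine ⟨m, nonZeroDivisors.ne_zero hm₀, fun r hr x hx => ?_⟩
  have htors : L.mkQ x ∈ Submodule.torsion R (M ⧸ L) :=
    (Submodule.mem_torsion_iff _).2
      ⟨⟨r, mem_nonZeroDivisors_of_ne_zero hr⟩, (Submodule.Quotient.mk_eq_zero L).2 hx⟩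
  have hann := Submodule.mem_annihilator.1 hm ⟨L.mkQ x, htors⟩ Submodule.mem_top
  exact (Submodule.Quotient.mk_eq_zero L).1 (congrArg Subtype.val hann)

theorem exists_ne_zero_forall_saturatedIn_smul [IsNoetherianRing R] [Module.Finite R M]
    {F : Set (Submodule R M)} (hF : F.Finite) :
    ∃ m : R, m ≠ 0 ∧ ∀ L ∈ F, ∀ H : Submodule R M, SaturatedIn L (m • H) := by
  choose m hm₀ hm using exists_ne_zero_smul_mem_of_smul_mem (R := R) (M := M)
  have hprod₀ : ∏ L ∈ hF.toFinset, m L ≠ 0 := Finset.prod_ne_zero_iff.2 fun L _ => hm₀ L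
  refine ⟨∏ L ∈ hF.toFinset, m L, hprod₀, fun L hL H r hr x hx hrx => ?_⟩
  obtain ⟨y, -, rfl⟩ := (Submodule.mem_smul_pointwise_iff_exists _ _ _).1 hx
  obtain ⟨d, hd⟩ := Finset.dvd_prod_of_mem m (hF.mem_toFinset.2 hL)
  rw [smul_smul] at hrx
  rw [hd, mul_comm, mul_smul]
  exact L.smul_mem d (hm L _ (mul_ne_zero hr hprod₀) y hrx)

theorem SaturatedIn.isTorsionFree_quotient {L H : Submodule R M} (h : SaturatedIn L H) :
    Module.IsTorsionFree R (H ⧸ L.submoduleOf H) := by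
  refine .of_smul_eq_zero fun r q hrq => ?_
  obtain ⟨x, rfl⟩ := Submodule.Quotient.mk_surjective _ q
  rw [← Submodule.Quotient.mk_smul, Submodule.Quotient.mk_eq_zero] at hrq
  exact or_iff_not_imp_left.2 fun hr => (Submodule.Quotient.mk_eq_zero _).2 (h hr x.2 hrq)

theorem SaturatedIn.finrank_inf_lt {L H : Submodule R M} [Module.Finite R H]
    (h : SaturatedIn L H) (hHL : ¬ H ≤ L) :
    Module.finrank R ↥(H ⊓ L) < Module.finrank R H := by
  have htf := h.isTorsionFree_quotient
  have hnontriv : Nontrivial (H ⧸ L.submoduleOf H) :=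
    Submodule.Quotient.nontrivial_iff.2 (mt Submodule.submoduleOf_eq_top.1 hHL)
  have hinf : Module.finrank R ↥(H ⊓ L) = Module.finrank R (L.submoduleOf H) := by
    rw [← Submodule.map_comap_subtype]
    exact Submodule.finrank_map_subtype_eq H (L.submoduleOf H)
  have hadd := Submodule.finrank_quotient_add_finrank (L.submoduleOf H)
  have hpos : 0 < Module.finrank R (H ⧸ L.submoduleOf H) := Module.finrank_pos
  lia

end SaturatedIn

section AffineSubspace

open AffineSubspace Pointwise

section Module

variable {R G : Type*} [Ring R] [AddCommGroup G] [Module R G]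

theorem mk'_eq_mk'_of_sub_mem {N : Submodule R G} {x y : G} (h : x - y ∈ N) :
    mk' x N = mk' y N := by
  simpa only [direction_mk'] using mk'_eq (s := mk' y N) (mem_mk'.2 h)

theorem biUnion_mk'_eq (s : AffineSubspace R G) {N : Submodule R G} (hN : N ≤ s.direction) :
    ⋃ x ∈ s, (mk' x N : Set G) = s := by
  ext y
  simp only [Set.mem_iUnion, SetLike.mem_coe, exists_prop]
  constructor
  · rintro ⟨x, hx, hy⟩
    simpa only [vsub_vadd] using vadd_mem_of_mem_direction (hN (mem_mk'.1 hy)) hx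
  · exact fun hy => ⟨y, hy, self_mem_mk' y N⟩

theorem le_of_direction_le_of_mem {s t : AffineSubspace R G} {p : G} (hps : p ∈ s) (hpt : p ∈ t)
    (h : s.direction ≤ t.direction) : s ≤ t := fun q hq => by
  simpa only [vsub_vadd] using vadd_mem_of_mem_direction (h (vsub_mem_direction hq hps)) hpt

end Module

variable {G : Type*} [AddCommGroup G]

theorem finite_quotient_smul_submoduleOf (H : Submodule ℤ G) [Module.Finite ℤ H] {m : ℤ}
    (hm : m ≠ 0) : Finite (H ⧸ (m • H).submoduleOf H) := by
  have : NeZero m := ⟨hm⟩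
  have hquot : Finite (H ⧸ Ideal.span {m} • (⊤ : Submodule ℤ H)) :=
    Submodule.finite_quotient_smul _ Module.Finite.fg_top
  have hsub : (m • H).submoduleOf H = Ideal.span {m} • (⊤ : Submodule ℤ H) := by
    rw [Submodule.ideal_span_singleton_smul]
    ext v
    simp [Submodule.submoduleOf, Submodule.mem_smul_pointwise_iff_exists, Subtype.ext_iff]
  rwa [hsub]

theorem finite_image_mk' (s : AffineSubspace ℤ G) {N : Submodule ℤ G}
    [Finite (s.direction ⧸ N.submoduleOf s.direction)] :
    ((fun x => mk' x N) '' (s : Set G)).Finite := by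
  obtain hs | ⟨p, hp⟩ := (s : Set G).eq_empty_or_nonempty
  · simp [hs]
  refine (Set.finite_range fun q : s.direction ⧸ N.submoduleOf s.direction =>
    mk' ((q.out : G) + p) N).subset ?_
  rintro _ ⟨x, hx, rfl⟩
  set v : s.direction := ⟨x - p, vsub_mem_direction hx hp⟩
  refine ⟨Submodule.Quotient.mk v, mk'_eq_mk'_of_sub_mem ?_⟩
  have hout := (Submodule.Quotient.eq (N.submoduleOf s.direction)).1
    (Submodule.Quotient.mk_out (Submodule.Quotient.mk v))
  simpa [v, Submodule.submoduleOf, sub_sub_eq_add_sub] using hout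

theorem exists_le_of_subset_biUnion {s : AffineSubspace ℤ G} (hs : (s : Set G).Nonempty)
    {F : Set (AffineSubspace ℤ G)} (hF : F.Finite)
    (hsat : ∀ t ∈ F, SaturatedIn t.direction s.direction)
    (hcov : (s : Set G) ⊆ ⋃ t ∈ F, t) : ∃ t ∈ F, s ≤ t := by
  classical
  obtain ⟨p, hp⟩ := hs
  set H : AffineSubspace ℤ G → AddSubgroup s.direction :=
    fun t => (t.direction.submoduleOf s.direction).toAddSubgroup
  choose! g hg using fun (t : AffineSubspace ℤ G) (h : ∃ v : s.direction, (v : G) + p ∈ t) => h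
  have hcosets : ⋃ t ∈ {t ∈ hF.toFinset | ∃ v : s.direction, (v : G) + p ∈ t},
      g t +ᵥ (H t : Set s.direction) = Set.univ := by
    refine Set.eq_univ_of_forall fun v => ?_
    obtain ⟨t, ht, hvt⟩ := Set.mem_iUnion₂.1 (hcov (vadd_mem_of_mem_direction v.2 hp))
    refine Set.mem_iUnion₂.2 ⟨t, Finset.mem_filter.2 ⟨hF.mem_toFinset.2 ht, v, hvt⟩, ?_⟩
    rw [Set.mem_vadd_set_iff_neg_vadd_mem]
    have hdiff := vsub_mem_direction hvt (hg t ⟨v, hvt⟩)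
    simpa [H, neg_add_eq_sub, Submodule.submoduleOf] using hdiff
  obtain ⟨t, ht, hindex⟩ := AddSubgroup.exists_finiteIndex_of_leftCoset_cover hcosets
  obtain ⟨htF, hmeet⟩ := Finset.mem_filter.1 ht
  replace htF := hF.mem_toFinset.1 htF
  have hdir : s.direction ≤ t.direction := fun v hv => by
    refine hsat t htF (Nat.cast_ne_zero.2 hindex.index_ne_zero) hv ?_
    have hsmul := AddSubgroup.nsmul_index_mem (H t) ⟨v, hv⟩
    simpa using! hsmul
  exact ⟨t, htF, le_of_direction_le_of_mem (vadd_mem_of_mem_direction (g t).2 hp) (hg t hmeet) hdir⟩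

end AffineSubspace

section CosetAlgebra

open AffineSubspace Pointwise

/-- The Boolean algebra of subsets of `G` generated by the cosets of subgroups of `G`. The affine
subspaces of `G` as a `ℤ`-module are exactly these cosets and the empty set. -/
def cosetAlgebra (G : Type*) [AddCommGroup G] : BooleanSubalgebra (Set G) :=
  .closure (Set.range ((↑) : AffineSubspace ℤ G → Set G))

variable {G G' : Type*} [AddCommGroup G] [AddCommGroup G']

theorem coe_mem_cosetAlgebra (s : AffineSubspace ℤ G) : (s : Set G) ∈ cosetAlgebra G :=
  BooleanSubalgebra.subset_closure ⟨s, rfl⟩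

theorem singleton_mem_cosetAlgebra (x : G) : {x} ∈ cosetAlgebra G := by
  simpa only [coe_affineSpan_singleton] using coe_mem_cosetAlgebra (affineSpan ℤ {x})

/-- The finite unions of cosets, a lattice of sets whose differences generate `cosetAlgebra G` under
finite unions. -/
def cosetUnions (G : Type*) [AddCommGroup G] : Set (Set G) :=
  {X | ∃ F : Set (AffineSubspace ℤ G), F.Finite ∧ X = ⋃ t ∈ F, t}

theorem isSublattice_cosetUnions : IsSublattice (cosetUnions G) where
  supClosed := by
    rintro _ ⟨F₁, hF₁, rfl⟩ _ ⟨F₂, hF₂, rfl⟩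
    exact ⟨F₁ ∪ F₂, hF₁.union hF₂, (Set.biUnion_union F₁ F₂ _).symm⟩
  infClosed := by
    rintro _ ⟨F₁, hF₁, rfl⟩ _ ⟨F₂, hF₂, rfl⟩
    refine ⟨Set.image2 (· ⊓ ·) F₁ F₂, hF₁.image2 _ hF₂, ?_⟩
    simp only [Set.biUnion_image2, Set.inf_eq_inter, Set.iUnion₂_inter]
    exact Set.iUnion₂_congr fun s _ => Set.inter_iUnion₂ _ _

theorem exists_finite_saturatedIn_cover [Module.Finite ℤ G] (s : AffineSubspace ℤ G)
    {F : Set (AffineSubspace ℤ G)} (hF : F.Finite) :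
    ∃ S : Set (AffineSubspace ℤ G), S.Finite ∧ (s : Set G) = ⋃ u ∈ S, u ∧
      ∀ u ∈ S, ∀ t ∈ F, SaturatedIn t.direction u.direction := by
  obtain ⟨m, hm, hsat⟩ := exists_ne_zero_forall_saturatedIn_smul (hF.image direction)
  have hfin := finite_quotient_smul_submoduleOf s.direction hm
  refine ⟨(fun x => mk' x (m • s.direction)) '' (s : Set G), finite_image_mk' s, ?_, ?_⟩
  · rw [Set.biUnion_image]
    exact (biUnion_mk'_eq s (Submodule.smul_le_self_of_tower m s.direction)).symm
  · rintro _ ⟨x, -, rfl⟩ t ht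
    simpa only [direction_mk'] using hsat _ ⟨t, ht, rfl⟩ s.direction

@[elab_as_elim]
theorem cosetAlgebra_induction [Module.Finite ℤ G] {p : Set G → Prop} (empty : p ∅)
    (union : ∀ X Y, p X → p Y → p (X ∪ Y))
    (sdiff : ∀ (s : AffineSubspace ℤ G) (F : Set (AffineSubspace ℤ G)), F.Finite →
      (∀ t ∈ F, SaturatedIn t.direction s.direction) → p (s \ ⋃ t ∈ F, t))
    {X : Set G} (hX : X ∈ cosetAlgebra G) : p X := by
  have biUnion {S : Set (AffineSubspace ℤ G)} (hS : S.Finite) {f : AffineSubspace ℤ G → Set G}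
      (hf : ∀ s ∈ S, p (f s)) : p (⋃ s ∈ S, f s) :=
    SupClosed.biSup_mem (s := {X | p X}) (fun X hX Y hY => union X Y hX hY) hS empty hf
  replace hX : X ∈ BooleanSubalgebra.closure (cosetUnions G) := by
    refine BooleanSubalgebra.closure_mono ?_ hX
    rintro _ ⟨s, rfl⟩
    exact ⟨{s}, Set.finite_singleton s, (Set.biUnion_singleton s _).symm⟩
  induction X, hX using BooleanSubalgebra.closure_sdiff_sup_induction
    isSublattice_cosetUnions ⟨∅, Set.finite_empty, by simp⟩
    ⟨{⊤}, Set.finite_singleton ⊤, by simp⟩ with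
  | sup X _ Y _ hX hY => exact union X Y hX hY
  | sdiff X hX Y hY =>
    obtain ⟨F₁, hF₁, rfl⟩ := hX
    obtain ⟨F₂, hF₂, rfl⟩ := hY
    simp only [Set.iUnion_sdiff]
    refine biUnion hF₁ fun s _ => ?_
    obtain ⟨S, hS, hs, hsat⟩ := exists_finite_saturatedIn_cover s hF₂
    simp only [hs, Set.iUnion_sdiff]
    exact biUnion hS fun u hu => sdiff u F₂ hF₂ (hsat u hu)

theorem image_sdiff_biUnion_eq (f : G →ₗ[ℤ] G') {s : AffineSubspace ℤ G}
    {F : Set (AffineSubspace ℤ G)} (hF : F.Finite)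
    (hsat : ∀ t ∈ F, SaturatedIn t.direction s.direction) :
    f '' (s \ ⋃ t ∈ F, t) =
      f '' s \ ⋃ t ∈ {t ∈ F | s.direction ⊓ f.ker ≤ t.direction}, f '' (s ⊓ t) := by
  ext y
  constructor
  · rintro ⟨x, ⟨hxs, hxF⟩, rfl⟩
    refine ⟨⟨x, hxs, rfl⟩, fun hy => hxF ?_⟩
    obtain ⟨t, ⟨htF, hker⟩, x', ⟨hx's, hx't⟩, hxx'⟩ := Set.mem_iUnion₂.1 hy
    have hsub : x - x' ∈ t.direction :=
      hker ⟨vsub_mem_direction hxs hx's, LinearMap.sub_mem_ker_iff.2 hxx'.symm⟩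
    refine Set.mem_biUnion htF ?_
    simpa using vadd_mem_of_mem_direction hsub hx't
  · rintro ⟨⟨x, hxs, rfl⟩, hxF⟩
    set fibre := mk' x (s.direction ⊓ f.ker)
    have hfibre : fibre.direction = s.direction ⊓ f.ker := direction_mk' _ _
    by_contra hy
    have hcov : (fibre : Set G) ⊆ ⋃ t ∈ F, t := fun x' hx' => by
      obtain ⟨hdir, hker⟩ := mem_mk'.1 hx'
      have hx's : x' ∈ s := by simpa using vadd_mem_of_mem_direction hdir hxs
      by_contra hx'F
      exact hy ⟨x', ⟨hx's, hx'F⟩, LinearMap.sub_mem_ker_iff.1 hker⟩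
    obtain ⟨t, htF, hle⟩ := exists_le_of_subset_biUnion ⟨x, self_mem_mk' _ _⟩ hF
      (fun t ht => (hsat t ht).mono (hfibre.trans_le inf_le_left)) hcov
    exact hxF (Set.mem_biUnion ⟨htF, hfibre.ge.trans (direction_le hle)⟩
      ⟨x, ⟨hxs, hle (self_mem_mk' _ _)⟩, rfl⟩)

theorem image_mem_cosetAlgebra [Module.Finite ℤ G] (f : G →ₗ[ℤ] G') {X : Set G}
    (hX : X ∈ cosetAlgebra G) : f '' X ∈ cosetAlgebra G' := by
  have image_coe_mem (s : AffineSubspace ℤ G) : f '' s ∈ cosetAlgebra G' :=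
    coe_mem_cosetAlgebra (s.map f.toAffineMap)
  refine cosetAlgebra_induction ?_ ?_ ?_ hX
  · exact (Set.image_empty f).symm ▸ BooleanSubalgebra.bot_mem
  · intro X Y hX hY
    exact (Set.image_union f X Y).symm ▸ BooleanSubalgebra.sup_mem hX hY
  · intro s F hF hsat
    rw [image_sdiff_biUnion_eq f hF hsat]
    exact BooleanSubalgebra.sdiff_mem (image_coe_mem s) (BooleanSubalgebra.biSup_mem
      (hF.subset (Set.sep_subset _ _)) fun t _ => image_coe_mem (s ⊓ t))

theorem preimage_mem_cosetAlgebra (f : G →ᵃ[ℤ] G') {X : Set G'} (hX : X ∈ cosetAlgebra G') :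
    f ⁻¹' X ∈ cosetAlgebra G := by
  induction hX using BooleanSubalgebra.closure_bot_sup_induction with
  | mem X hX =>
    obtain ⟨s, rfl⟩ := hX
    exact coe_mem_cosetAlgebra (s.comap f)
  | bot => exact BooleanSubalgebra.bot_mem
  | sup X _ Y _ hX hY => exact BooleanSubalgebra.sup_mem hX hY
  | compl X _ hX => exact BooleanSubalgebra.compl_mem hX

end CosetAlgebra

section Definability

open Language Set

variable {α : Type*}

theorem exists_affineMap_realize_eq (t : LangGrp[[(univ : Set ℤ)]].Term α) :
    ∃ f : (α → ℤ) →ᵃ[ℤ] ℤ, ∀ v : α → ℤ, t.realize v = f v := by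
  induction t with
  | var i => exact ⟨(LinearMap.proj i).toAffineMap, fun v => rfl⟩
  | @func l g ts ih =>
    choose f hf using ih
    match l, g with
    | 0, .inl _ => exact ⟨.const ℤ _ 0, fun v => rfl⟩
    | 2, .inl _ => exact ⟨f 0 + f 1, fun v => congrArg₂ (· + ·) (hf 0 v) (hf 1 v)⟩
    | 0, .inr c => exact ⟨.const ℤ _ c.1, fun v => rfl⟩

theorem setOf_realize_mem_cosetAlgebra [Finite α] {n : ℕ}
    (φ : LangGrp[[(univ : Set ℤ)]].BoundedFormula α n) :
    {v : α ⊕ Fin n → ℤ | φ.Realize (v ∘ Sum.inl) (v ∘ Sum.inr)} ∈ cosetAlgebra (α ⊕ Fin n → ℤ) := by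
  induction φ with
  | falsum => exact BooleanSubalgebra.bot_mem
  | equal t₁ t₂ =>
    obtain ⟨f, hf⟩ := exists_affineMap_realize_eq t₁
    obtain ⟨g, hg⟩ := exists_affineMap_realize_eq t₂
    convert! preimage_mem_cosetAlgebra (f - g) (singleton_mem_cosetAlgebra 0) using 1
    ext v
    simp [BoundedFormula.Realize, hf, hg, sub_eq_zero]
  | rel R _ => exact R.elim (fun R => nomatch R) (fun R => nomatch R)
  | imp φ ψ hφ hψ => exact BooleanSubalgebra.himp_mem hφ hψ
  | @all n φ hφ =>
    convert! BooleanSubalgebra.compl_mem (image_mem_cosetAlgebra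
      (LinearMap.funLeft ℤ ℤ (Sum.map id Fin.castSucc)) (BooleanSubalgebra.compl_mem hφ)) using 1
    ext v
    simp only [BoundedFormula.realize_all, mem_compl_iff, mem_image, mem_ofPred_eq]
    constructor
    · rintro h ⟨w, hw, rfl⟩
      refine hw ?_
      convert! h (w (.inr (Fin.last n))) using 1
      exact (Fin.snoc_init_self (w ∘ Sum.inr)).symm
    · intro h a
      by_contra ha
      refine h ⟨Sum.elim (v ∘ Sum.inl) (Fin.snoc (v ∘ Sum.inr) a), by simpa using ha, ?_⟩
      ext i
      cases i <;> simp [LinearMap.funLeft_apply]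

/-- The functions on `α → ℤ` that are a difference of two terms. The language `LangGrp` has no
symbol for negation, so the functions given by a single term do not form a group. -/
def termDifferences (α : Type*) : AddSubgroup ((α → ℤ) → ℤ) where
  carrier := {f | ∃ t s : LangGrp[[(univ : Set ℤ)]].Term α, ∀ v, f v = t.realize v - s.realize v}
  zero_mem' := ⟨(LangGrp.con (⟨0, trivial⟩ : (univ : Set ℤ))).term,
    (LangGrp.con (⟨0, trivial⟩ : (univ : Set ℤ))).term, fun _ => (sub_self _).symm⟩
  add_mem' := by
    rintro f g ⟨t, s, hf⟩ ⟨t', s', hg⟩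
    let addTerms (t t' : LangGrp[[(univ : Set ℤ)]].Term α) : LangGrp[[(univ : Set ℤ)]].Term α :=
      .func (l := 2) (.inl ()) ![t, t']
    have realize_addTerms (t t') (v : α → ℤ) :
        (addTerms t t').realize v = t.realize v + t'.realize v := rfl
    refine ⟨addTerms t t', addTerms s s', fun v => ?_⟩
    rw [realize_addTerms, realize_addTerms, Pi.add_apply, hf, hg]
    abel
  neg_mem' := by
    rintro f ⟨t, s, hf⟩
    exact ⟨s, t, fun v => by rw [Pi.neg_apply, hf, neg_sub]⟩

theorem const_mem_termDifferences (c : ℤ) : Function.const _ c ∈ termDifferences α :=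
  ⟨(LangGrp.con (⟨c, trivial⟩ : (univ : Set ℤ))).term,
    (LangGrp.con (⟨0, trivial⟩ : (univ : Set ℤ))).term, fun _ => (sub_zero c).symm⟩

theorem eval_mem_termDifferences (i : α) : Function.eval i ∈ termDifferences α :=
  ⟨.var i, (LangGrp.con (⟨0, trivial⟩ : (univ : Set ℤ))).term, fun v => (sub_zero (v i)).symm⟩

theorem linearMap_mem_termDifferences [Finite α] (f : (α → ℤ) →ₗ[ℤ] ℤ) :
    ⇑f ∈ termDifferences α := by
  classical
  cases nonempty_fintype α
  have hf : ⇑f = ∑ i, f (Pi.single i 1) • Function.eval i := by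
    ext v
    conv_lhs => rw [pi_eq_sum_univ' v, map_sum]
    simp [mul_comm, -zsmul_eq_mul]
  rw [hf]
  exact sum_mem fun i _ => zsmul_mem (eval_mem_termDifferences i) _

theorem definable_setOf_eq_zero {f : (α → ℤ) → ℤ} (hf : f ∈ termDifferences α) :
    (univ : Set ℤ).Definable LangGrp {v | f v = 0} := by
  obtain ⟨t, s, hf⟩ := hf
  refine ⟨t.equal s, ?_⟩
  ext v
  simp [hf, Formula.realize_equal, sub_eq_zero]

theorem definable_setOf_linearMap_eq {β : Type*} [Finite α] [Finite β]
    (f : (α → ℤ) →ₗ[ℤ] (β → ℤ)) (b : β → ℤ) :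
    (univ : Set ℤ).Definable LangGrp {v | f v = b} := by
  have hinter : {v | f v = b} =
      ⋂ j, {v | (⇑(LinearMap.proj j ∘ₗ f) - Function.const (α → ℤ) (b j)) v = 0} := by
    ext v
    simp [funext_iff, sub_eq_zero]
  rw [hinter]
  exact definable_iInter_of_finite fun j => definable_setOf_eq_zero
    (sub_mem (linearMap_mem_termDifferences _) (const_mem_termDifferences _))

theorem definable_affineSubspace [Finite α] (s : AffineSubspace ℤ (α → ℤ)) :
    (univ : Set ℤ).Definable LangGrp (s : Set (α → ℤ)) := by
  obtain hs | ⟨p, hp⟩ := (s : Set (α → ℤ)).eq_empty_or_nonempty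
  · exact hs ▸ definable_empty
  obtain ⟨m, g, hg⟩ := Submodule.fg_iff_exists_fin_generating_family.1
    (IsNoetherian.noetherian s.direction)
  let f : (α ⊕ Fin m → ℤ) →ₗ[ℤ] (α → ℤ) :=
    LinearMap.funLeft ℤ ℤ Sum.inl - Fintype.linearCombination ℤ g ∘ₗ LinearMap.funLeft ℤ ℤ Sum.inr
  convert! (definable_setOf_linearMap_eq f p).image_comp Sum.inl using 1
  ext x
  have hx : x ∈ s ↔ ∃ c : Fin m → ℤ, x - Fintype.linearCombination ℤ g c = p := by
    rw [← AffineSubspace.vsub_right_mem_direction_iff_mem hp, ← hg,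
      ← Fintype.range_linearCombination, LinearMap.mem_range]
    simp only [vsub_eq_sub, sub_eq_iff_eq_add, eq_sub_iff_add_eq, eq_comm, add_comm]
  rw [SetLike.mem_coe, hx]
  constructor
  · rintro ⟨c, hc⟩
    exact ⟨Sum.elim x c, hc, rfl⟩
  · rintro ⟨w, hw, rfl⟩
    exact ⟨w ∘ Sum.inr, hw⟩

theorem definable_iff_mem_cosetAlgebra [Finite α] {X : Set (α → ℤ)} :
    (univ : Set ℤ).Definable LangGrp X ↔ X ∈ cosetAlgebra (α → ℤ) := by
  constructor
  · rintro ⟨φ, rfl⟩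
    convert! preimage_mem_cosetAlgebra
      (LinearMap.funLeft ℤ ℤ (Sum.elim id Fin.elim0)).toAffineMap
      (setOf_realize_mem_cosetAlgebra φ) using 1
    ext v
    exact iff_of_eq (congrArg (BoundedFormula.Realize φ v) (Subsingleton.elim _ _))
  · intro hX
    induction hX using BooleanSubalgebra.closure_bot_sup_induction with
    | mem X hX =>
      obtain ⟨s, rfl⟩ := hX
      exact definable_affineSubspace s
    | bot => exact definable_empty
    | sup X _ Y _ hX hY => exact hX.union hY
    | compl X _ hX => exact hX.compl

end Definability

section QuasiCoset

open AffineSubspace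

variable {n k : ℕ}

theorem isCosetOfRank_coe {s : AffineSubspace ℤ (Fin n → ℤ)} (hs : (s : Set (Fin n → ℤ)).Nonempty) :
    IsCosetOfRank (Module.finrank ℤ s.direction) (s : Set (Fin n → ℤ)) := by
  obtain ⟨p, hp⟩ := hs
  refine ⟨p, s.direction.toAddSubgroup, rfl, ?_⟩
  ext x
  refine ⟨fun hx => ⟨x - p, vsub_mem_direction hx hp, add_sub_cancel p x⟩, ?_⟩
  rintro ⟨v, hv, rfl⟩
  simpa only [vadd_eq_add, add_comm] using! vadd_mem_of_mem_direction hv hp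

theorem coveredByRank_biUnion {F : Set (AffineSubspace ℤ (Fin n → ℤ))} (hF : F.Finite)
    (hrank : ∀ t ∈ F, (t : Set (Fin n → ℤ)).Nonempty → Module.finrank ℤ t.direction ≤ k) :
    CoveredByRank (⋃ t ∈ F, (t : Set (Fin n → ℤ))) k := by
  obtain ⟨m, c, -, hc⟩ :=
    (hF.subset (Set.sep_subset F fun t => (t : Set (Fin n → ℤ)).Nonempty)).fin_param
  have mem_of (i : Fin m) : c i ∈ F ∧ (c i : Set (Fin n → ℤ)).Nonempty := by
    have hi : c i ∈ Set.range c := ⟨i, rfl⟩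
    rwa [hc] at hi
  refine ⟨m, fun i => c i, fun i => ⟨_, hrank _ (mem_of i).1 (mem_of i).2,
    isCosetOfRank_coe (mem_of i).2⟩, Set.iUnion₂_subset fun t ht x hx => ?_⟩
  obtain ⟨i, rfl⟩ : t ∈ Set.range c := hc ▸ ⟨ht, x, hx⟩
  exact Set.mem_iUnion_of_mem i hx

theorem setRank_biUnion_lt {F : Set (AffineSubspace ℤ (Fin n → ℤ))} (hF : F.Finite)
    (hrank : ∀ t ∈ F, (t : Set (Fin n → ℤ)).Nonempty → Module.finrank ℤ t.direction < k) :
    setRank (⋃ t ∈ F, (t : Set (Fin n → ℤ))) < k := by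
  unfold setRank
  split_ifs with hempty
  · lia
  · obtain ⟨x, hx⟩ := Set.nonempty_iff_ne_empty.2 hempty
    obtain ⟨t, ht, hxt⟩ := Set.mem_iUnion₂.1 hx
    have hk : 0 < k := (Nat.zero_le _).trans_lt (hrank t ht ⟨x, hxt⟩)
    have hcov : CoveredByRank (⋃ t ∈ F, (t : Set (Fin n → ℤ))) k.pred :=
      coveredByRank_biUnion hF fun t ht hne => Nat.le_pred_of_lt (hrank t ht hne)
    exact_mod_cast (Nat.sInf_le hcov).trans_lt (Nat.pred_lt hk.ne')

theorem isQuasiCoset_sdiff_biUnion {s : AffineSubspace ℤ (Fin n → ℤ)}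
    {F : Set (AffineSubspace ℤ (Fin n → ℤ))} (hF : F.Finite)
    (hsat : ∀ t ∈ F, SaturatedIn t.direction s.direction)
    (hne : ((s : Set (Fin n → ℤ)) \ ⋃ t ∈ F, t).Nonempty) :
    IsQuasiCoset (Module.finrank ℤ s.direction) ((s : Set (Fin n → ℤ)) \ ⋃ t ∈ F, t) := by
  obtain ⟨x, hxs, hxF⟩ := hne
  have hZ : ⋃ t ∈ (s ⊓ ·) '' F, (t : Set (Fin n → ℤ)) = (s : Set (Fin n → ℤ)) ∩ ⋃ t ∈ F, t := by
    rw [Set.biUnion_image, Set.inter_iUnion₂]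
    rfl
  refine ⟨s, _, isCosetOfRank_coe ⟨x, hxs⟩, hZ.trans_subset Set.inter_subset_left, ?_,
    setRank_biUnion_lt (hF.image _) ?_, ?_⟩
  · exact definable_iff_mem_cosetAlgebra.2
      (BooleanSubalgebra.biSup_mem (hF.image _) fun t _ => coe_mem_cosetAlgebra t)
  · rintro _ ⟨t, ht, rfl⟩ ⟨p, hps, hpt⟩
    have hnot : ¬ s.direction ≤ t.direction := fun hle =>
      hxF (Set.mem_biUnion ht (le_of_direction_le_of_mem hps hpt hle hxs))
    rw [direction_inf_of_mem hps hpt]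
    exact (hsat t ht).finrank_inf_lt hnot
  · rw [hZ, Set.sdiff_self_inter]

theorem exists_finite_sUnion_isQuasiCoset {X : Set (Fin n → ℤ)} (hX : IsGroupDefinable X) :
    ∃ 𝒬 : Set (Set (Fin n → ℤ)), 𝒬.Finite ∧ (∀ Q ∈ 𝒬, ∃ k, IsQuasiCoset k Q) ∧ X = ⋃₀ 𝒬 := by
  refine cosetAlgebra_induction ?_ ?_ ?_ (definable_iff_mem_cosetAlgebra.1 hX)
  · exact ⟨∅, Set.finite_empty, by simp, by simp⟩
  · rintro _ _ ⟨𝒬₁, hfin₁, h₁, rfl⟩ ⟨𝒬₂, hfin₂, h₂, rfl⟩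
    exact ⟨𝒬₁ ∪ 𝒬₂, hfin₁.union hfin₂, fun Q hQ => hQ.elim (h₁ Q) (h₂ Q),
      (Set.sUnion_union 𝒬₁ 𝒬₂).symm⟩
  · intro s F hF hsat
    obtain hempty | hne := ((s : Set (Fin n → ℤ)) \ ⋃ t ∈ F, t).eq_empty_or_nonempty
    · exact ⟨∅, Set.finite_empty, by simp, by simpa using hempty⟩
    · exact ⟨{_}, Set.finite_singleton _,
        fun Q hQ => ⟨_, hQ ▸ isQuasiCoset_sdiff_biUnion hF hsat hne⟩, (Set.sUnion_singleton _).symm⟩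

end QuasiCoset

/-- every nonempty `(ℤ,+,0)`-definable subset of `ℤⁿ` is a finite union of
quasi-cosets. -/
theorem stmt9 {n : ℕ} (A : Set (Fin n → ℤ)) (hA : A.Nonempty) (hdef : IsGroupDefinable A) :
    ∃ (m : ℕ) (Q : Fin m → Set (Fin n → ℤ)),
      (∀ i, ∃ k, IsQuasiCoset k (Q i)) ∧ A = ⋃ i, Q i := by
  obtain ⟨𝒬, hfin, hquasi, rfl⟩ := exists_finite_sUnion_isQuasiCoset hdef
  obtain ⟨m, Q, -, rfl⟩ := hfin.fin_param
  exact ⟨m, Q, fun i => hquasi _ ⟨i, rfl⟩, Set.sUnion_range Q⟩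
end

section
/- If Q, P_1, ..., P_k are closed convex sets in R^n with nonempty interior and Q ⊆ P_1 ∪ ... ∪ P_k, then the inradius of Q is at most the sum of the inradii of the P_i. -/
open scoped ENNReal

/-- The inradius of a subset of `ℝⁿ`: the supremum of radii of closed balls contained in it
(possibly `∞`). -/
noncomputable def inradius {n : ℕ} (P : Set (EuclideanSpace ℝ (Fin n))) : ℝ≥0∞ :=
  ⨆ (x : EuclideanSpace ℝ (Fin n)) (r : NNReal) (_ : Metric.closedBall x (r : ℝ) ⊆ P),
    (r : ℝ≥0∞)

/-!
Bang's argument, for closed convex sets in a Hilbert space. Suppose that `P i` contains no ball of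
radius `r i - ε`, so that every point `s` comes within less than `r i - ε` of leaving some
half-space `{x | ⟪u, x⟫ ≤ h} ⊇ P i` with `‖u‖ = 1`. Choose one such half-space `(uᵢ, hᵢ)` for
each `i` so that `‖c + ∑ rᵢ uᵢ‖² - 2 ∑ rᵢ hᵢ` is within `2 ε²` of its supremum. Then
`x = c + ∑ rᵢ uᵢ` lies in the ball of radius `∑ rᵢ` around `c`, but in no `P i`: exchanging
`(uᵢ, hᵢ)` for the half-space found at `s = x - rᵢ uᵢ` cannot gain `2 ε²`, so `s` is also at
depth less than `rᵢ` in the half-space `(uᵢ, hᵢ)`, and adding `rᵢ uᵢ` leaves it.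
A maximizer need not exist in infinite dimensions, which is the reason for the slack `ε`.
-/

open scoped RealInnerProductSpace Topology
open Filter Function Metric

/-- The inradius of a subset of a metric space: the supremum of the radii of the closed balls
contained in it (possibly `∞`). On Euclidean space it unfolds to the same term as `inradius`. -/
noncomputable def ballInradius {α : Type*} [PseudoMetricSpace α] (P : Set α) : ℝ≥0∞ :=
  ⨆ (x : α) (r : NNReal) (_ : closedBall x (r : ℝ) ⊆ P), (r : ℝ≥0∞)

theorem coe_le_ballInradius {α : Type*} [PseudoMetricSpace α] {P : Set α} {x : α} {r : NNReal}
    (h : closedBall x r ⊆ P) : (r : ℝ≥0∞) ≤ ballInradius P :=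
  le_iSup_of_le x (le_iSup₂_of_le r h le_rfl)

theorem ballInradius_le_iff {α : Type*} [PseudoMetricSpace α] {P : Set α} {a : ℝ≥0∞} :
    ballInradius P ≤ a ↔ ∀ (x : α) (r : NNReal), closedBall x r ⊆ P → (r : ℝ≥0∞) ≤ a := by
  simp only [ballInradius, iSup_le_iff]

theorem sum_apply_update {ι α M : Type*} [Fintype ι] [DecidableEq ι] [AddCommGroup M]
    (f : ι → α → M) (p : ι → α) (i : ι) (a : α) :
    ∑ j, f j (update p i a j) = ∑ j, f j (p j) - f i (p i) + f i a := by
  simp only [apply_update f, Finset.sum_update_of_mem (Finset.mem_univ i),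
    Finset.sdiff_singleton_eq_erase, Finset.sum_erase_eq_sub (Finset.mem_univ i), add_comm]

theorem exists_mem_forall_lt_add {α : Type*} {s : Set α} {f : α → ℝ} (hs : s.Nonempty)
    (hf : BddAbove (f '' s)) {ε : ℝ} (hε : 0 < ε) : ∃ a ∈ s, ∀ b ∈ s, f b < f a + ε := by
  obtain ⟨_, ⟨a, ha, rfl⟩, hlt⟩ := Real.add_neg_lt_sSup (hs.image f) (neg_lt_zero.2 hε)
  refine ⟨a, ha, fun b hb => ?_⟩
  linarith [le_csSup hf (Set.mem_image_of_mem f hb)]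

section UnitHalfSpaces

variable {H : Type*} [NormedAddCommGroup H] [InnerProductSpace ℝ H] {P : Set H}

/-- The closed half-spaces `{x | ⟪u, x⟫ ≤ h}` containing `P`, encoded as pairs `(u, h)` with `u`
a unit vector. -/
def unitHalfSpaces (P : Set H) : Set (H × ℝ) :=
  {p | ‖p.1‖ = 1 ∧ ∀ x ∈ P, ⟪p.1, x⟫ ≤ p.2}

theorem neg_norm_le_snd_of_mem_unitHalfSpaces {p : H × ℝ} (hp : p ∈ unitHalfSpaces P) {a : H}
    (ha : a ∈ P) : -‖a‖ ≤ p.2 := by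
  have h := neg_le_of_abs_le (abs_real_inner_le_norm p.1 a)
  rw [hp.1, one_mul] at h
  exact h.trans (hp.2 a ha)

theorem exists_mem_unitHalfSpaces_lt_inner_of_notMem [CompleteSpace H] (hconv : Convex ℝ P)
    (hcl : IsClosed P) (hne : P.Nonempty) {y : H} (hy : y ∉ P) :
    ∃ p ∈ unitHalfSpaces P, p.2 < ⟪p.1, y⟫ := by
  obtain ⟨f, t, hfP, hfy⟩ := geometric_hahn_banach_closed_point hconv hcl hy
  obtain ⟨w, rfl⟩ := (InnerProductSpace.toDual ℝ H).surjective f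
  simp only [InnerProductSpace.toDual_apply_apply] at hfP hfy
  have hw : w ≠ 0 := by
    rintro rfl
    obtain ⟨a, ha⟩ := hne
    simp only [inner_zero_left] at hfP hfy
    exact (hfP a ha).not_gt hfy
  have hw' : 0 < ‖w‖⁻¹ := inv_pos.2 (norm_pos_iff.2 hw)
  refine ⟨(‖w‖⁻¹ • w, ‖w‖⁻¹ * t), ⟨norm_smul_inv_norm hw, fun x hx => ?_⟩, ?_⟩
  · rw [real_inner_smul_left]
    exact mul_le_mul_of_nonneg_left (hfP x hx).le hw'.le
  · rw [real_inner_smul_left]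
    exact mul_lt_mul_of_pos_left hfy hw'

theorem exists_mem_unitHalfSpaces_sub_lt_inner [CompleteSpace H] (hconv : Convex ℝ P)
    (hcl : IsClosed P) (hne : P.Nonempty) {s : H} {r : ℝ} (hs : ¬ closedBall s r ⊆ P) :
    ∃ p ∈ unitHalfSpaces P, p.2 - r < ⟪p.1, s⟫ := by
  obtain ⟨y, hys, hyP⟩ := Set.not_subset.1 hs
  obtain ⟨p, hp, hpy⟩ := exists_mem_unitHalfSpaces_lt_inner_of_notMem hconv hcl hne hyP
  have hdist : ⟪p.1, y⟫ - ⟪p.1, s⟫ ≤ r :=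
    calc ⟪p.1, y⟫ - ⟪p.1, s⟫ = ⟪p.1, y - s⟫ := (inner_sub_right _ _ _).symm
      _ ≤ ‖p.1‖ * ‖y - s‖ := real_inner_le_norm _ _
      _ ≤ r := by rw [hp.1, one_mul]; exact mem_closedBall_iff_norm.1 hys
  exact ⟨p, hp, by linarith⟩

end UnitHalfSpaces

section Bang

variable {ι H : Type*} [Fintype ι] [NormedAddCommGroup H] [InnerProductSpace ℝ H]
  {P : ι → Set H} {r : ι → ℝ} {p : ι → H × ℝ} {c : H} {ε : ℝ}

/-- The point `c + ∑ rᵢ uᵢ` attached to half-spaces `pᵢ = (uᵢ, hᵢ)`: the candidate for a point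
outside all of them. -/
def bangPoint (c : H) (r : ι → ℝ) (p : ι → H × ℝ) : H :=
  c + ∑ i, r i • (p i).1

/-- Bang's functional `‖c + ∑ rᵢ uᵢ‖² - 2 ∑ rᵢ hᵢ` of half-spaces `pᵢ = (uᵢ, hᵢ)`, whose
near-maximizers make `bangPoint` leave every half-space. -/
def bangFunctional (c : H) (r : ι → ℝ) (p : ι → H × ℝ) : ℝ :=
  ‖bangPoint c r p‖ ^ 2 - 2 * ∑ i, r i * (p i).2

theorem bangPoint_mem_closedBall (c : H) (hr : ∀ i, 0 ≤ r i) (hp : ∀ i, ‖(p i).1‖ = 1) :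
    bangPoint c r p ∈ closedBall c (∑ i, r i) := by
  rw [bangPoint, mem_closedBall_iff_norm, add_sub_cancel_left]
  refine norm_sum_le_of_le _ fun i _ => ?_
  rw [norm_smul, hp i, mul_one, Real.norm_of_nonneg (hr i)]

theorem bddAbove_bangFunctional_image (c : H) (hr : ∀ i, 0 ≤ r i) (hne : ∀ i, (P i).Nonempty) :
    BddAbove (bangFunctional c r '' Set.univ.pi fun i => unitHalfSpaces (P i)) := by
  choose a ha using hne
  refine ⟨(‖c‖ + ∑ i, r i) ^ 2 - 2 * ∑ i, r i * -‖a i‖, ?_⟩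
  rintro _ ⟨p, hp, rfl⟩
  have hp i : p i ∈ unitHalfSpaces (P i) := hp i trivial
  have hpoint : ‖bangPoint c r p‖ ≤ ‖c‖ + ∑ i, r i :=
    norm_le_of_mem_closedBall (bangPoint_mem_closedBall c hr fun i => (hp i).1)
  have hoffset : ∑ i, r i * -‖a i‖ ≤ ∑ i, r i * (p i).2 :=
    Finset.sum_le_sum fun i _ => mul_le_mul_of_nonneg_left
      (neg_norm_le_snd_of_mem_unitHalfSpaces (hp i) (ha i)) (hr i)
  unfold bangFunctional
  gcongr

theorem bangFunctional_update_sub [DecidableEq ι] (c : H) (r : ι → ℝ) {i : ι} {q : H × ℝ}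
    (hp : ‖(p i).1‖ = 1) (hq : ‖q.1‖ = 1) :
    bangFunctional c r (update p i q) - bangFunctional c r p =
      2 * r i * ((⟪q.1, bangPoint c r p - r i • (p i).1⟫ - q.2) -
        (⟪(p i).1, bangPoint c r p - r i • (p i).1⟫ - (p i).2)) := by
  set s := bangPoint c r p - r i • (p i).1 with hs
  have hpoint : bangPoint c r p = s + r i • (p i).1 := (sub_add_cancel _ _).symm
  have hpoint_update : bangPoint c r (update p i q) = s + r i • q.1 := by
    rw [hs, bangPoint, bangPoint, sum_apply_update (fun j (b : H × ℝ) => r j • b.1)]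
    abel
  have hnorm_sq (u : H) (hu : ‖u‖ = 1) :
      ‖s + r i • u‖ ^ 2 = ‖s‖ ^ 2 + 2 * r i * ⟪u, s⟫ + r i ^ 2 := by
    rw [norm_add_sq_real, real_inner_smul_right, real_inner_comm, norm_smul, hu, mul_one,
      Real.norm_eq_abs, sq_abs]
    ring
  rw [bangFunctional, bangFunctional, hpoint, hpoint_update, hnorm_sq _ hp, hnorm_sq _ hq,
    sum_apply_update (fun j (b : H × ℝ) => r j * b.2)]
  ring

theorem bangPoint_notMem_of_forall_bangFunctional_lt (hε : 0 < ε) {i : ι} (hr : ε ≤ r i)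
    (hs : ∀ s, ∃ q ∈ unitHalfSpaces (P i), q.2 - (r i - ε) < ⟪q.1, s⟫)
    (hp : ∀ j, p j ∈ unitHalfSpaces (P j))
    (hmax : ∀ q ∈ Set.univ.pi fun j => unitHalfSpaces (P j),
      bangFunctional c r q < bangFunctional c r p + 2 * ε ^ 2) :
    bangPoint c r p ∉ P i := by
  classical
  set s := bangPoint c r p - r i • (p i).1
  obtain ⟨q, hq, hqs⟩ := hs s
  have hexchange : 2 * r i * ((⟪q.1, s⟫ - q.2) - (⟪(p i).1, s⟫ - (p i).2)) < 2 * r i * ε :=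
    calc _ = bangFunctional c r (update p i q) - bangFunctional c r p :=
          (bangFunctional_update_sub c r (hp i).1 hq.1).symm
      _ < 2 * ε ^ 2 := sub_lt_iff_lt_add'.2 <|
          hmax _ (Set.update_mem_pi_iff_of_mem (fun j _ => hp j) |>.2 fun _ => hq)
      _ ≤ 2 * r i * ε := by nlinarith
  have hdepth : (p i).2 - r i < ⟪(p i).1, s⟫ := by
    have := lt_of_mul_lt_mul_left hexchange (by linarith)
    linarith
  have hinner : ⟪(p i).1, bangPoint c r p⟫ = ⟪(p i).1, s⟫ + r i := by
    rw [inner_sub_right, real_inner_smul_right, real_inner_self_eq_norm_sq, (hp i).1]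
    ring
  intro hmem
  linarith [(hp i).2 _ hmem]

theorem exists_mem_closedBall_forall_notMem [CompleteSpace H] (hconv : ∀ i, Convex ℝ (P i))
    (hcl : ∀ i, IsClosed (P i)) (hne : ∀ i, (P i).Nonempty) (c : H) (hε : 0 < ε)
    (hr : ∀ i, ε ≤ r i) (hs : ∀ i s, ¬ closedBall s (r i - ε) ⊆ P i) :
    ∃ x ∈ closedBall c (∑ i, r i), ∀ i, x ∉ P i := by
  have hsep i s := exists_mem_unitHalfSpaces_sub_lt_inner (hconv i) (hcl i) (hne i) (hs i s)
  have hr₀ i : 0 ≤ r i := hε.le.trans (hr i)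
  have hpi : (Set.univ.pi fun i => unitHalfSpaces (P i)).Nonempty :=
    Set.univ_pi_nonempty_iff.2 fun i => (hsep i c).imp fun _ h => h.1
  obtain ⟨p, hp, hmax⟩ := exists_mem_forall_lt_add hpi (bddAbove_bangFunctional_image c hr₀ hne)
    (show 0 < 2 * ε ^ 2 by positivity)
  have hp i : p i ∈ unitHalfSpaces (P i) := hp i trivial
  exact ⟨bangPoint c r p, bangPoint_mem_closedBall c hr₀ fun i => (hp i).1, fun i =>
    bangPoint_notMem_of_forall_bangFunctional_lt hε (hr i) (hsep i) hp hmax⟩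

end Bang

section Kadets

variable {ι H : Type*} [Fintype ι] [NormedAddCommGroup H] [InnerProductSpace ℝ H]
  [CompleteSpace H] {P : ι → Set H}

theorem radius_le_sum_of_closedBall_subset_iUnion {r : ι → NNReal} {c : H} {R : NNReal}
    (hconv : ∀ i, Convex ℝ (P i)) (hcl : ∀ i, IsClosed (P i)) (hne : ∀ i, (P i).Nonempty)
    (hr : ∀ i, ballInradius (P i) ≤ r i) (hcover : closedBall c R ⊆ ⋃ i, P i) :
    R ≤ ∑ i, r i := by
  have hslack (ε : ℝ) (hε : 0 < ε) : (R : ℝ) ≤ ∑ i, (r i + ε + ε) := by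
    by_contra! hlt
    have hball i s : ¬ closedBall s (r i + ε + ε - ε) ⊆ P i := fun hsub => by
      lift ε to NNReal using hε.le
      rw [add_sub_cancel_right] at hsub
      have hle : r i + ε ≤ r i :=
        ENNReal.coe_le_coe.1 ((coe_le_ballInradius hsub).trans (hr i))
      exact hle.not_gt (lt_add_of_pos_right _ hε)
    obtain ⟨x, hx, hxP⟩ := exists_mem_closedBall_forall_notMem hconv hcl hne c hε
      (fun i => le_add_of_nonneg_left (by positivity)) hball
    obtain ⟨i, hi⟩ := Set.mem_iUnion.1 (hcover (closedBall_subset_closedBall hlt.le hx))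
    exact hxP i hi
  have htendsto : Tendsto (fun ε : ℝ => ∑ i, (r i + ε + ε)) (𝓝[>] 0) (𝓝 (∑ i, (r i : ℝ))) :=
    (Continuous.tendsto' (by fun_prop) 0 _ (by simp)).mono_left nhdsWithin_le_nhds
  exact_mod_cast ge_of_tendsto htendsto (eventually_mem_nhdsWithin.mono hslack)

theorem ballInradius_le_sum_of_nonempty {Q : Set H} (hconv : ∀ i, Convex ℝ (P i))
    (hcl : ∀ i, IsClosed (P i)) (hne : ∀ i, (P i).Nonempty) (hcover : Q ⊆ ⋃ i, P i) :
    ballInradius Q ≤ ∑ i, ballInradius (P i) := by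
  refine ballInradius_le_iff.2 fun c R hR => ?_
  by_cases htop : ∃ i, ballInradius (P i) = ∞
  · obtain ⟨i, hi⟩ := htop
    rw [ENNReal.sum_eq_top.2 ⟨i, Finset.mem_univ i, hi⟩]
    exact le_top
  · push Not at htop
    have hr i : ((ballInradius (P i)).toNNReal : ℝ≥0∞) = ballInradius (P i) :=
      ENNReal.coe_toNNReal (htop i)
    calc (R : ℝ≥0∞) ≤ ∑ i, ((ballInradius (P i)).toNNReal : ℝ≥0∞) := mod_cast
          radius_le_sum_of_closedBall_subset_iUnion hconv hcl hne (fun i => (hr i).ge)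
            (hR.trans hcover)
      _ = ∑ i, ballInradius (P i) := Finset.sum_congr rfl fun i _ => hr i

theorem stmt11_general (Q : Set H) (P : ι → Set H) (hPconv : ∀ i, Convex ℝ (P i))
    (hPcl : ∀ i, IsClosed (P i)) (hcover : Q ⊆ ⋃ i, P i) :
    ballInradius Q ≤ ∑ i, ballInradius (P i) := by
  classical
  have hcover' : Q ⊆ ⋃ i : {i // (P i).Nonempty}, P i := fun x hx => by
    obtain ⟨i, hi⟩ := Set.mem_iUnion.1 (hcover hx)
    exact Set.mem_iUnion.2 ⟨⟨i, x, hi⟩, hi⟩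
  calc ballInradius Q ≤ ∑ i : {i // (P i).Nonempty}, ballInradius (P i) :=
        ballInradius_le_sum_of_nonempty (fun i => hPconv i) (fun i => hPcl i) (fun i => i.2) hcover'
    _ = ∑ i with (P i).Nonempty, ballInradius (P i) :=
        (Finset.sum_subtype _ Finset.mem_filter_univ fun i => ballInradius (P i)).symm
    _ ≤ ∑ i, ballInradius (P i) := Finset.sum_le_univ_sum_of_nonneg fun _ => zero_le

end Kadets

/-- Kadets: if closed convex sets with nonempty interior cover a closed convex set
with nonempty interior, the inradius of the covered set is at most the sum of the inradii. -/
theorem stmt11 {n k : ℕ} (Q : Set (EuclideanSpace ℝ (Fin n)))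
    (P : Fin k → Set (EuclideanSpace ℝ (Fin n)))
    (hQconv : Convex ℝ Q) (hQcl : IsClosed Q) (hQint : (interior Q).Nonempty)
    (hPconv : ∀ i, Convex ℝ (P i)) (hPcl : ∀ i, IsClosed (P i))
    (hPint : ∀ i, (interior (P i)).Nonempty)
    (hcover : Q ⊆ ⋃ i, P i) :
    inradius Q ≤ ∑ i, inradius (P i) :=
  stmt11_general Q P hPconv hPcl hcover
end

section
/- Suppose A ⊆ Z^{n+1} is definable in (Z,+,<,0). Then A can be written as a finite union of sets of the form {(x̄, y) : x̄ ∈ X_t, f_t(x̄) ≤ y ≤ g_t(x̄), y ≡ c_t (mod m_t)}, where each X_t ⊆ Z^n is definable in (Z,+,<,0), f_t and g_t are Z-linear functions (standard Z-linear or identically ±∞) with X_t contained in their domains, and 0 ≤ c_t < m_t. -/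
open FirstOrder

/-- `ℤ ∪ {-∞, +∞}`. -/
abbrev ZBar : Type := WithBot (WithTop ℤ)

/-- The inclusion of `ℤ` into `ℤ ∪ {-∞, +∞}`. -/
def toZBar (k : ℤ) : ZBar := ((k : WithTop ℤ) : ZBar)

/-- A standard `ℤ`-linear partial function: its domain is a coset `c̄ + m̄ℤⁿ` and on the domain
it is given by `f(x̄) = u + ∑ aᵢ (xᵢ - cᵢ)/mᵢ`. -/
def IsStdZLinear {n : ℕ} (dom : Set (Fin n → ℤ)) (f : (Fin n → ℤ) → ℤ) : Prop :=
  ∃ (u : ℤ) (a c mv : Fin n → ℤ),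
    (∀ i, 0 < mv i ∧ 0 ≤ c i ∧ c i < mv i) ∧
    dom = {x | ∀ i, mv i ∣ (x i - c i)} ∧
    ∀ x ∈ dom, f x = u + ∑ i, a i * ((x i - c i) / mv i)

/-- A `ℤ`-linear function: either extreme (constantly `-∞` or `+∞`, with domain all of `ℤⁿ`) or
standard `ℤ`-linear. -/
def IsZLinear {n : ℕ} (dom : Set (Fin n → ℤ)) (F : (Fin n → ℤ) → ZBar) : Prop :=
  (dom = Set.univ ∧ ∀ x, F x = ⊥) ∨ (dom = Set.univ ∧ ∀ x, F x = ⊤) ∨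
    (∃ f : (Fin n → ℤ) → ℤ, IsStdZLinear dom f ∧ ∀ x ∈ dom, F x = toZBar (f x))

/-! A *cell* is the part of a cylinder over a quantifier-free base between two bounds of the form
`±∞` or `L / N`, cut out by one congruence on the last coordinate. Finite unions of cells are closed
under intersection: splitting the base according to which bound is larger makes maxima and minima of
bounds again bounds, and two congruences combine modulo the least common multiple. An atomic
condition `0 ≤ t` or `d ∣ t` is a finite union of cells, by distinguishing residue classes. Hence
every quantifier-free set is a finite union of cells.

The projection of a cell with finite lower bound `a` and modulus `m` is quantifier free, since a
fibre is nonempty exactly when it contains one of `a, a + 1, …, a + m - 1`. This gives quantifier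
elimination, so every Presburger set is a finite union of cells. Finally `L / N` is standard
`ℤ`-linear on each of the finitely many cosets of `Nℤⁿ`. -/

open Set

/-- A set is a finite union of sets satisfying `P`. The index type is an arbitrary finite type, so
that such unions can be nested without renumbering. -/
def IsFiniteUnionOf {β : Type*} (P : Set β → Prop) (s : Set β) : Prop :=
  ∃ (ι : Type) (_ : Finite ι) (S : ι → Set β), (∀ i, P (S i)) ∧ s = ⋃ i, S i

namespace IsFiniteUnionOf

variable {β : Type*} {P Q R : Set β → Prop} {s t : Set β}

theorem of (hs : P s) : IsFiniteUnionOf P s :=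
  ⟨Unit, inferInstance, fun _ => s, fun _ => hs, (iUnion_const s).symm⟩

theorem empty : IsFiniteUnionOf P ∅ :=
  ⟨Empty, inferInstance, fun _ => ∅, fun i => i.elim, (iUnion_of_empty _).symm⟩

theorem iUnion {ι : Type} [Finite ι] {S : ι → Set β} (hS : ∀ i, IsFiniteUnionOf P (S i)) :
    IsFiniteUnionOf P (⋃ i, S i) := by
  choose κ hκ T hT hST using hS
  refine ⟨Σ i, κ i, inferInstance, fun j => T j.1 j.2, fun j => hT j.1 j.2, ?_⟩
  rw [iUnion_sigma]
  exact iUnion_congr hST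

theorem union (hs : IsFiniteUnionOf P s) (ht : IsFiniteUnionOf P t) :
    IsFiniteUnionOf P (s ∪ t) := by
  rw [union_eq_iUnion]
  exact .iUnion (Bool.forall_bool.2 ⟨ht, hs⟩)

theorem bind (hs : IsFiniteUnionOf P s) (hPQ : ∀ u, P u → IsFiniteUnionOf Q u) :
    IsFiniteUnionOf Q s := by
  obtain ⟨ι, _, S, hS, rfl⟩ := hs
  exact .iUnion fun i => hPQ _ (hS i)

theorem mono (hs : IsFiniteUnionOf P s) (hPQ : ∀ u, P u → Q u) : IsFiniteUnionOf Q s :=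
  hs.bind fun u hu => .of (hPQ u hu)

theorem inter (hs : IsFiniteUnionOf P s) (ht : IsFiniteUnionOf Q t)
    (hPQ : ∀ u v, P u → Q v → IsFiniteUnionOf R (u ∩ v)) : IsFiniteUnionOf R (s ∩ t) := by
  obtain ⟨ι, _, S, hS, rfl⟩ := hs
  obtain ⟨κ, _, T, hT, rfl⟩ := ht
  rw [iUnion_inter_iUnion]
  exact .iUnion fun i => .iUnion fun j => hPQ _ _ (hS i) (hT j)

theorem exists_fin (hs : IsFiniteUnionOf P s) :
    ∃ (k : ℕ) (S : Fin k → Set β), (∀ i, P (S i)) ∧ s = ⋃ i, S i := by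
  obtain ⟨ι, _, S, hS, rfl⟩ := hs
  obtain ⟨k, ⟨e⟩⟩ := Finite.exists_equiv_fin ι
  exact ⟨k, S ∘ e.symm, fun i => hS _, (e.symm.iSup_comp (g := S)).symm⟩

end IsFiniteUnionOf

theorem exists_fin_dvd_sub {m : ℕ} (hm : 0 < m) (z : ℤ) : ∃ r : Fin m, (m : ℤ) ∣ z - r := by
  obtain ⟨r, hrm, hr⟩ := Int.existsUnique_equiv_nat z (Int.natCast_pos.2 hm)
  exact ⟨⟨r, Int.ofNat_lt.1 hrm⟩, hr.dvd⟩

/-- The subsets of `ℤ^α` defined by quantifier-free formulas of Presburger arithmetic: the lattice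
of sets generated by the inequalities `0 ≤ t x` and the divisibilities `d ∣ t x`, with `t` affine.
Complements are not needed as a constructor, see `IsQuantifierFree.compl`. -/
inductive IsQuantifierFree {α : Type*} : Set (α → ℤ) → Prop
  | nonneg (t : (α → ℤ) →ᵃ[ℤ] ℤ) : IsQuantifierFree {x | 0 ≤ t x}
  | dvd {d : ℤ} (hd : 0 < d) (t : (α → ℤ) →ᵃ[ℤ] ℤ) : IsQuantifierFree {x | d ∣ t x}
  | inter {s t : Set (α → ℤ)} (hs : IsQuantifierFree s) (ht : IsQuantifierFree t) :
      IsQuantifierFree (s ∩ t)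
  | union {s t : Set (α → ℤ)} (hs : IsQuantifierFree s) (ht : IsQuantifierFree t) :
      IsQuantifierFree (s ∪ t)

namespace IsQuantifierFree

variable {α : Type*} {s : Set (α → ℤ)}

theorem empty : IsQuantifierFree (∅ : Set (α → ℤ)) := by
  simpa using! nonneg (AffineMap.const ℤ (α → ℤ) (-1 : ℤ))

theorem univ : IsQuantifierFree (univ : Set (α → ℤ)) := by
  simpa using! nonneg (0 : (α → ℤ) →ᵃ[ℤ] ℤ)

theorem iUnion {ι : Type*} [Finite ι] {S : ι → Set (α → ℤ)} (hS : ∀ i, IsQuantifierFree (S i)) :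
    IsQuantifierFree (⋃ i, S i) := by
  simpa only [mem_univ, iUnion_true] using finite_univ.induction_on
    (motive := fun J _ => IsQuantifierFree (⋃ i ∈ J, S i)) _ (by simpa using empty)
    fun _ _ ih => by simpa only [biUnion_insert] using (hS _).union ih

theorem le (s t : (α → ℤ) →ᵃ[ℤ] ℤ) : IsQuantifierFree {x | s x ≤ t x} := by
  simpa using! nonneg (t - s)

theorem eq (s t : (α → ℤ) →ᵃ[ℤ] ℤ) : IsQuantifierFree {x | s x = t x} := by
  simpa only [le_antisymm_iff] using! (le s t).inter (le t s)

theorem compl (hs : IsQuantifierFree s) : IsQuantifierFree sᶜ := by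
  induction hs with
  | nonneg t =>
    simpa only [compl_ofPred, not_le] using! le (t + AffineMap.const ℤ _ 1) 0
  | @dvd d hd t =>
    have hset : {x | d ∣ t x}ᶜ = ⋃ j : Ioo 0 d, {x | d ∣ t x - j} := by
      ext x
      simp only [mem_compl_iff, mem_ofPred_eq, mem_iUnion, Subtype.exists, mem_Ioo, exists_prop]
      constructor
      · intro h
        have hpos : 0 < t x % d := (Int.emod_nonneg _ hd.ne').lt_of_ne'
          fun h0 => h (Int.dvd_of_emod_eq_zero h0)
        exact ⟨t x % d, ⟨hpos, Int.emod_lt_of_pos _ hd⟩, Int.dvd_self_sub_emod⟩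
      · rintro ⟨j, ⟨hj0, hjd⟩, hdvd⟩ h
        exact hjd.not_ge (Int.le_of_dvd hj0 ((Int.dvd_iff_dvd_of_dvd_sub hdvd).1 h))
    rw [hset]
    exact .iUnion fun j => .dvd hd (t - AffineMap.const ℤ _ (j : ℤ))
  | inter _ _ ihs iht => simpa only [compl_inter] using ihs.union iht
  | union _ _ ihs iht => simpa only [compl_union] using ihs.inter iht

theorem iInter {ι : Type*} [Finite ι] {S : ι → Set (α → ℤ)} (hS : ∀ i, IsQuantifierFree (S i)) :
    IsQuantifierFree (⋂ i, S i) := by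
  simpa only [compl_iUnion, compl_compl] using (IsQuantifierFree.iUnion fun i => (hS i).compl).compl

theorem sep_of_forall_iff (hs : IsQuantifierFree s) {p : (α → ℤ) → Prop} (q : Prop)
    (h : ∀ x ∈ s, p x ↔ q) : IsQuantifierFree {x ∈ s | p x} := by
  by_cases hq : q
  · rwa [sep_eq_self_iff_mem_true.2 fun x hx => (h x hx).2 hq]
  · rw [sep_eq_empty_iff_mem_false.2 fun x hx hp => hq ((h x hx).1 hp)]
    exact empty

end IsQuantifierFree

theorem affineMap_apply_eq_add_sum {α : Type*} [Fintype α] [DecidableEq α]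
    (t : (α → ℤ) →ᵃ[ℤ] ℤ) (c x : α → ℤ) :
    t x = t c + ∑ i, t.linear (Pi.single i 1) * (x i - c i) := by
  have hlin : t.linear (x - c) = ∑ i, t.linear (Pi.single i 1) * (x i - c i) := by
    rw [t.linear.pi_apply_eq_sum_univ (x - c)]
    refine Finset.sum_congr rfl fun i _ => ?_
    rw [smul_eq_mul, mul_comm, Pi.sub_apply]
    congr 2 with j
    simp only [Pi.single_apply, eq_comm]
  rw [← hlin, ← vsub_eq_sub, t.linearMap_vsub, vsub_eq_sub, add_sub_cancel]

section Definability

open FirstOrder.Language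

variable {α : Type*}

theorem definableFun_add_s17 {s t : (α → ℤ) → ℤ} (hs : (univ : Set ℤ).DefinableFun LangOrdGrp s)
    (ht : (univ : Set ℤ).DefinableFun LangOrdGrp t) :
    (univ : Set ℤ).DefinableFun LangOrdGrp (s + t) := by
  have hadd : (univ : Set ℤ).DefinableFun LangOrdGrp fun v : Fin 2 → ℤ => v 0 + v 1 :=
    (DefinableFun.fun_symbol (M := ℤ) (L := LangOrdGrp) (n := 2) (Sum.inl ())).of_empty
  have hst : (univ : Set ℤ).DefinableMap LangOrdGrp fun v => ![s v, t v] :=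
    Fin.forall_fin_two.2 ⟨hs, ht⟩
  exact DefinableFun.comp (g := fun v => ![s v, t v]) hst hadd

theorem definableFun_neg {s : (α → ℤ) → ℤ} (hs : (univ : Set ℤ).DefinableFun LangOrdGrp s) :
    (univ : Set ℤ).DefinableFun LangOrdGrp (-s) := by
  have hneg : (univ : Set ℤ).DefinableFun LangOrdGrp fun v : Fin 1 → ℤ => -v 0 := by
    have hgraph := (definableFun_add_s17 (.proj LangOrdGrp (i := some (0 : Fin 1)))
      (.proj LangOrdGrp (i := none))).ofPred_eq (definableFun_const _ _ (mem_univ 0))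
    simpa only [DefinableFun, Function.tupleGraph, neg_eq_iff_add_eq_zero] using! hgraph
  have hs' : (univ : Set ℤ).DefinableMap LangOrdGrp fun v => ![s v] :=
    Fin.forall_fin_one.2 hs
  exact DefinableFun.comp (g := fun v => ![s v]) hs' hneg

/-- The definable functions `ℤ^α → ℤ`, as a group under pointwise addition. -/
def definableFunAddSubgroup (α : Type*) : AddSubgroup ((α → ℤ) → ℤ) where
  carrier := {s | (univ : Set ℤ).DefinableFun LangOrdGrp s}
  add_mem' := definableFun_add_s17
  zero_mem' := definableFun_const _ _ (mem_univ 0)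
  neg_mem' := definableFun_neg

theorem definableFun_affineMap [Finite α] (t : (α → ℤ) →ᵃ[ℤ] ℤ) :
    (univ : Set ℤ).DefinableFun LangOrdGrp t := by
  classical
  have := Fintype.ofFinite α
  have ht : (t : (α → ℤ) → ℤ) =
      (∑ i, t.linear (Pi.single i 1) • fun x : α → ℤ => x i) + fun _ => t 0 := by
    ext x
    simp [affineMap_apply_eq_add_sum t 0 x, add_comm]
  rw [ht]
  exact definableFun_add_s17 (sum_mem (S := definableFunAddSubgroup α) fun i _ =>
    zsmul_mem (DefinableFun.proj _) _) (definableFun_const _ _ (mem_univ _))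

theorem definable_le : (univ : Set ℤ).Definable LangOrdGrp {v : Fin 2 → ℤ | v 0 ≤ v 1} :=
  (empty_definable_iff.2 ⟨Relations.formula₂ (L := LangOrdGrp) (Sum.inr leSymb)
    (Term.var 0) (Term.var 1), by ext; rfl⟩).mono (empty_subset _)

theorem IsQuantifierFree.definable [Finite α] {s : Set (α → ℤ)} (hs : IsQuantifierFree s) :
    (Set.univ : Set ℤ).Definable LangOrdGrp s := by
  induction hs with
  | nonneg t =>
    have h0t : (Set.univ : Set ℤ).DefinableMap LangOrdGrp fun v => ![0, t v] :=
      Fin.forall_fin_two.2 ⟨definableFun_const _ _ (mem_univ _), definableFun_affineMap t⟩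
    exact definable_le.preimage_map h0t
  | @dvd d _ t =>
    let inl : (α ⊕ Fin 1 → ℤ) →ₗ[ℤ] (α → ℤ) := LinearMap.funLeft ℤ ℤ Sum.inl
    have heq := (definableFun_affineMap (t.comp inl.toAffineMap)).ofPred_eq
      (definableFun_affineMap (d • (LinearMap.proj (Sum.inr 0)).toAffineMap))
    convert! Definable.exists_of_finite heq using 1
    ext v
    exact ⟨fun ⟨y, hy⟩ => ⟨fun _ => y, hy⟩, fun ⟨w, hw⟩ => ⟨w 0, hw⟩⟩
  | inter _ _ ihs iht => exact ihs.inter iht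
  | union _ _ ihs iht => exact ihs.union iht

end Definability

section Bounds

variable {α : Type*} {X Y : Set (α → ℤ)} {F G : (α → ℤ) → ZBar}

theorem toZBar_le_toZBar {a b : ℤ} : toZBar a ≤ toZBar b ↔ a ≤ b := by
  simp [toZBar]

theorem not_toZBar_le_bot (a : ℤ) : ¬toZBar a ≤ ⊥ := by
  simp [toZBar]

theorem not_top_le_toZBar (a : ℤ) : ¬⊤ ≤ toZBar a := by
  simp [toZBar, ← WithBot.coe_top]

/-- On `X`, the function `F` is either extreme or of the form `L / N` with `L` affine and `N`
dividing `L`. This is the class of bounds of cells before their base is split into cosets; it avoids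
bookkeeping of the moduli of standard `ℤ`-linear functions. -/
inductive IsRatAffineOn (F : (α → ℤ) → ZBar) (X : Set (α → ℤ)) : Prop
  | bot (hF : ∀ x ∈ X, F x = ⊥)
  | top (hF : ∀ x ∈ X, F x = ⊤)
  | div {N : ℤ} (hN : 0 < N) (L : (α → ℤ) →ᵃ[ℤ] ℤ) (hdvd : ∀ x ∈ X, N ∣ L x)
      (hF : ∀ x ∈ X, F x = toZBar (L x / N))

namespace IsRatAffineOn

theorem mono (hF : IsRatAffineOn F X) (hYX : Y ⊆ X) : IsRatAffineOn F Y := by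
  cases hF with
  | bot hF => exact .bot fun x hx => hF x (hYX hx)
  | top hF => exact .top fun x hx => hF x (hYX hx)
  | div hN L hdvd hF => exact .div hN L (fun x hx => hdvd x (hYX hx)) fun x hx => hF x (hYX hx)

theorem congr (hF : IsRatAffineOn F X) (hFG : EqOn F G X) : IsRatAffineOn G X := by
  cases hF with
  | bot hF => exact .bot fun x hx => (hFG hx).symm.trans (hF x hx)
  | top hF => exact .top fun x hx => (hFG hx).symm.trans (hF x hx)
  | div hN L hdvd hF => exact .div hN L hdvd fun x hx => (hFG hx).symm.trans (hF x hx)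

theorem isQuantifierFree_sep_le (hF : IsRatAffineOn F X) (hX : IsQuantifierFree X)
    (hG : IsRatAffineOn G X) : IsQuantifierFree {x ∈ X | F x ≤ G x} := by
  cases hF with
  | bot hF => exact hX.sep_of_forall_iff True fun x hx => by simp [hF x hx]
  | top hF =>
    cases hG with
    | bot hG => exact hX.sep_of_forall_iff False fun x hx => by simp [hF x hx, hG x hx]
    | top hG => exact hX.sep_of_forall_iff True fun x hx => by simp [hG x hx]
    | div _ _ _ hG =>
      exact hX.sep_of_forall_iff False fun x hx => by
        simp only [hF x hx, hG x hx, not_top_le_toZBar]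
  | @div N hN L hdvd hF =>
    cases hG with
    | bot hG =>
      exact hX.sep_of_forall_iff False fun x hx => by
        simp only [hF x hx, hG x hx, not_toZBar_le_bot]
    | top hG => exact hX.sep_of_forall_iff True fun x hx => by simp [hG x hx]
    | @div M hM K hdvd' hG =>
      have hcross : {x ∈ X | F x ≤ G x} = X ∩ {x | (M • L) x ≤ (N • K) x} := by
        ext x
        refine and_congr_right fun hx => ?_
        rw [hF x hx, hG x hx, toZBar_le_toZBar,
          Int.div_le_div_iff_of_dvd_of_pos_of_pos hN hM (hdvd x hx) (hdvd' x hx), mul_comm _ N]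
        rfl
      rw [hcross]
      exact hX.inter (.le _ _)

theorem isFiniteUnionOf_forall_le_or_forall_le (hX : IsQuantifierFree X) (hF : IsRatAffineOn F X)
    (hG : IsRatAffineOn G X) :
    IsFiniteUnionOf (fun Y => (IsQuantifierFree Y ∧ Y ⊆ X) ∧
      ((∀ x ∈ Y, F x ≤ G x) ∨ ∀ x ∈ Y, G x ≤ F x)) X := by
  have hsplit : {x ∈ X | F x ≤ G x} ∪ {x ∈ X | G x ≤ F x} = X := by
    rw [← sep_or]
    exact sep_eq_self_iff_mem_true.2 fun x _ => le_total _ _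
  rw [← hsplit]
  exact .union
    (.of ⟨⟨hF.isQuantifierFree_sep_le hX hG, subset_union_left⟩, .inl fun x hx => hx.2⟩)
    (.of ⟨⟨hG.isQuantifierFree_sep_le hX hF, subset_union_right⟩, .inr fun x hx => hx.2⟩)

theorem sup (hX : IsQuantifierFree X) (hF : IsRatAffineOn F X) (hG : IsRatAffineOn G X) :
    IsFiniteUnionOf (fun Y => IsQuantifierFree Y ∧ IsRatAffineOn (F ⊔ G) Y) X := by
  refine (isFiniteUnionOf_forall_le_or_forall_le hX hF hG).mono ?_
  rintro Y ⟨⟨hY, hYX⟩, hle | hle⟩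
  · exact ⟨hY, (hG.mono hYX).congr fun x hx => (sup_of_le_right (hle x hx)).symm⟩
  · exact ⟨hY, (hF.mono hYX).congr fun x hx => (sup_of_le_left (hle x hx)).symm⟩

theorem inf (hX : IsQuantifierFree X) (hF : IsRatAffineOn F X) (hG : IsRatAffineOn G X) :
    IsFiniteUnionOf (fun Y => IsQuantifierFree Y ∧ IsRatAffineOn (F ⊓ G) Y) X := by
  refine (isFiniteUnionOf_forall_le_or_forall_le hX hF hG).mono ?_
  rintro Y ⟨⟨hY, hYX⟩, hle | hle⟩
  · exact ⟨hY, (hF.mono hYX).congr fun x hx => (inf_of_le_left (hle x hx)).symm⟩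
  · exact ⟨hY, (hG.mono hYX).congr fun x hx => (inf_of_le_right (hle x hx)).symm⟩

end IsRatAffineOn

end Bounds

section Cells

variable {n : ℕ} {X : Set (Fin n → ℤ)} {F G : (Fin n → ℤ) → ZBar}

/-- The points above `X` lying between the graphs of `F` and `G`, with last coordinate congruent to
`c` modulo `m`. -/
def cell (X : Set (Fin n → ℤ)) (F G : (Fin n → ℤ) → ZBar) (c : ℤ) (m : ℕ) :
    Set (Fin (n + 1) → ℤ) :=
  {p | Fin.init p ∈ X ∧ F (Fin.init p) ≤ toZBar (p (Fin.last n)) ∧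
    toZBar (p (Fin.last n)) ≤ G (Fin.init p) ∧ (m : ℤ) ∣ p (Fin.last n) - c}

theorem cell_iUnion {ι : Type*} (X : ι → Set (Fin n → ℤ)) (F G : (Fin n → ℤ) → ZBar) (c : ℤ)
    (m : ℕ) : cell (⋃ i, X i) F G c m = ⋃ i, cell (X i) F G c m := by
  ext p
  simp only [cell, mem_iUnion, mem_ofPred_eq, exists_and_right]

theorem IsFiniteUnionOf.cell {P : Set (Fin n → ℤ) → Prop} {Q : Set (Fin (n + 1) → ℤ) → Prop}
    {c : ℤ} {m : ℕ} (hX : IsFiniteUnionOf P X) (hPQ : ∀ Y, P Y → Q (cell Y F G c m)) :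
    IsFiniteUnionOf Q (cell X F G c m) := by
  obtain ⟨ι, hι, Y, hY, rfl⟩ := hX
  exact ⟨ι, hι, _, fun i => hPQ _ (hY i), cell_iUnion Y F G c m⟩

/-- Cells with quantifier-free base and rational affine bounds. The class of sets for which
intersections and projections are computed; it is refined to `IsStdCell` at the end. -/
def IsCell (s : Set (Fin (n + 1) → ℤ)) : Prop :=
  ∃ (X : Set (Fin n → ℤ)) (F G : (Fin n → ℤ) → ZBar) (c : ℤ) (m : ℕ), IsQuantifierFree X ∧
    IsRatAffineOn F X ∧ IsRatAffineOn G X ∧ 0 < m ∧ s = cell X F G c m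

theorem cell_inter_cell {X' : Set (Fin n → ℤ)} {F' G' : (Fin n → ℤ) → ZBar} {c c' r : ℤ}
    {m m' : ℕ} (hr : (m : ℤ) ∣ r - c) (hr' : (m' : ℤ) ∣ r - c') :
    cell X F G c m ∩ cell X' F' G' c' m' = cell (X ∩ X') (F ⊔ F') (G ⊓ G') r (m.lcm m') := by
  ext p
  have hcong (y : ℤ) :
      ((m.lcm m' : ℕ) : ℤ) ∣ y - r ↔ (m : ℤ) ∣ y - c ∧ (m' : ℤ) ∣ y - c' := by
    rw [← sub_add_sub_cancel y r c, ← sub_add_sub_cancel y r c', dvd_add_left hr,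
      dvd_add_left hr', Int.natCast_dvd, Int.natCast_dvd, Int.natCast_dvd, Nat.lcm_dvd_iff]
  simp only [cell, mem_inter_iff, mem_ofPred_eq, Pi.sup_apply, Pi.inf_apply, sup_le_iff,
    le_inf_iff, hcong]
  tauto

theorem IsCell.inter {s t : Set (Fin (n + 1) → ℤ)} (hs : IsCell s) (ht : IsCell t) :
    IsFiniteUnionOf IsCell (s ∩ t) := by
  obtain ⟨X, F, G, c, m, hX, hF, hG, hm, rfl⟩ := hs
  obtain ⟨X', F', G', c', m', hX', hF', hG', hm', rfl⟩ := ht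
  obtain hempty | ⟨p, hp, hp'⟩ := (cell X F G c m ∩ cell X' F' G' c' m').eq_empty_or_nonempty
  · exact hempty ▸ .empty
  have hXX' := hX.inter hX'
  have hpieces := (IsRatAffineOn.sup hXX' (hF.mono inter_subset_left)
    (hF'.mono inter_subset_right)).inter (IsRatAffineOn.inf hXX' (hG.mono inter_subset_left)
    (hG'.mono inter_subset_right)) fun Y Z hY hZ => .of (P := fun W => IsQuantifierFree W ∧
      IsRatAffineOn (F ⊔ F') W ∧ IsRatAffineOn (G ⊓ G') W) ⟨hY.1.inter hZ.1,
        hY.2.mono inter_subset_left, hZ.2.mono inter_subset_right⟩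
  rw [inter_self] at hpieces
  rw [cell_inter_cell hp.2.2.2 hp'.2.2.2]
  exact hpieces.cell fun Y ⟨hY, hFF', hGG'⟩ =>
    ⟨Y, _, _, _, _, hY, hFF', hGG', Nat.lcm_pos hm hm', rfl⟩

theorem exists_ge_le_dvd_iff {a c : ℤ} {m : ℕ} (hm : 0 < m) {z : ZBar} :
    (∃ y, toZBar a ≤ toZBar y ∧ toZBar y ≤ z ∧ (m : ℤ) ∣ y - c) ↔
      ∃ j : Fin m, toZBar (a + j) ≤ z ∧ (m : ℤ) ∣ a + j - c := by
  constructor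
  · rintro ⟨y, hay, hyz, hdvd⟩
    obtain ⟨j, hj⟩ := exists_fin_dvd_sub hm (y - a)
    have hay := toZBar_le_toZBar.1 hay
    have hjy : a + j ≤ y := by
      by_contra! hyj
      have hmj := Int.le_of_dvd (by omega) (dvd_sub_comm.1 hj)
      omega
    refine ⟨j, (toZBar_le_toZBar.2 hjy).trans hyz, ?_⟩
    have hsub : a + j - c = (y - c) - (y - a - j) := by ring
    exact hsub ▸ dvd_sub hdvd hj
  · rintro ⟨j, hjz, hdvd⟩
    exact ⟨a + j, toZBar_le_toZBar.2 (by omega), hjz, hdvd⟩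

theorem exists_le_dvd_iff {c : ℤ} {m : ℕ} (hm : 0 < m) {z : ZBar} :
    (∃ y, toZBar y ≤ z ∧ (m : ℤ) ∣ y - c) ↔ z ≠ ⊥ := by
  constructor
  · rintro ⟨y, hyz, -⟩ rfl
    exact not_toZBar_le_bot y hyz
  · intro hz
    induction z using WithBot.recBotCoe with
    | bot => exact absurd rfl hz
    | coe z =>
      induction z with
      | top => exact ⟨c, le_top, by simp⟩
      | coe k =>
        have hk : 0 ≤ (k - c) % m := Int.emod_nonneg _ (by positivity)
        refine ⟨k - (k - c) % m, toZBar_le_toZBar.2 (by omega), ?_⟩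
        rw [sub_right_comm]
        exact Int.dvd_self_sub_emod

theorem snoc_mem_cell {c : ℤ} {m : ℕ} {x : Fin n → ℤ} {y : ℤ} :
    (Fin.snoc x y : Fin (n + 1) → ℤ) ∈ cell X F G c m ↔
      x ∈ X ∧ F x ≤ toZBar y ∧ toZBar y ≤ G x ∧ (m : ℤ) ∣ y - c := by
  simp only [cell, mem_ofPred_eq, Fin.init_snoc, Fin.snoc_last]

theorem isQuantifierFree_exists_snoc_mem_cell_of_div {N : ℤ} (hN : 0 < N)
    (L : (Fin n → ℤ) →ᵃ[ℤ] ℤ) (hdvd : ∀ x ∈ X, N ∣ L x) (hX : IsQuantifierFree X)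
    (hF : ∀ x ∈ X, F x = toZBar (L x / N)) (hG : IsRatAffineOn G X) (c : ℤ) {m : ℕ} (hm : 0 < m) :
    IsQuantifierFree {x | ∃ y : ℤ, (Fin.snoc x y : Fin (n + 1) → ℤ) ∈ cell X F G c m} := by
  have hset : {x | ∃ y : ℤ, (Fin.snoc x y : Fin (n + 1) → ℤ) ∈ cell X F G c m} =
      ⋃ j : Fin m, {x ∈ X | toZBar ((L x + N * j) / N) ≤ G x} ∩
        {x | N * m ∣ L x + N * (j - c)} := by
    ext x
    simp only [snoc_mem_cell, exists_and_left, mem_iUnion, mem_ofPred_eq, mem_inter_iff, and_assoc]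
    refine and_congr_right fun hx => ?_
    rw [hF x hx, exists_ge_le_dvd_iff hm]
    refine exists_congr fun j => ?_
    obtain ⟨a, ha⟩ := hdvd x hx
    simp only [ha, ← mul_add, Int.mul_ediv_cancel_left _ hN.ne', mul_dvd_mul_iff_left hN.ne',
      add_sub_assoc]
  have hshift (j : ℤ) : IsRatAffineOn (fun x => toZBar ((L x + N * j) / N)) X :=
    .div hN (L + AffineMap.const ℤ _ (N * j)) (fun x hx => dvd_add (hdvd x hx) (dvd_mul_right _ _))
      fun _ _ => rfl
  rw [hset]
  exact .iUnion fun j => .inter ((hshift j).isQuantifierFree_sep_le hX hG)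
    (.dvd (mul_pos hN (Int.natCast_pos.2 hm)) (L + AffineMap.const ℤ _ (N * (j - c))))

theorem IsCell.isQuantifierFree_exists_snoc {s : Set (Fin (n + 1) → ℤ)} (hs : IsCell s) :
    IsQuantifierFree {x | ∃ y : ℤ, (Fin.snoc x y : Fin (n + 1) → ℤ) ∈ s} := by
  obtain ⟨X, F, G, c, m, hX, hF, hG, hm, rfl⟩ := hs
  cases hF with
  | bot hF =>
    have hset : {x | ∃ y : ℤ, (Fin.snoc x y : Fin (n + 1) → ℤ) ∈ cell X F G c m} =
        X ∩ {x ∈ X | G x ≤ ⊥}ᶜ := by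
      ext x
      simp only [snoc_mem_cell, exists_and_left, mem_inter_iff, mem_compl_iff, mem_ofPred_eq]
      refine and_congr_right fun hx => ?_
      simp [hF x hx, hx, exists_le_dvd_iff hm]
    rw [hset]
    exact hX.inter (hG.isQuantifierFree_sep_le hX (.bot fun _ _ => rfl)).compl
  | top hF =>
    convert! IsQuantifierFree.empty using 1
    ext x
    simp +contextual [snoc_mem_cell, hF, not_top_le_toZBar, -top_le_iff]
  | div hN L hdvd hF => exact isQuantifierFree_exists_snoc_mem_cell_of_div hN L hdvd hX hF hG c hm

theorem IsFiniteUnionOf.isQuantifierFree_exists_snoc {s : Set (Fin (n + 1) → ℤ)}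
    (hs : IsFiniteUnionOf IsCell s) :
    IsQuantifierFree {x | ∃ y : ℤ, (Fin.snoc x y : Fin (n + 1) → ℤ) ∈ s} := by
  obtain ⟨ι, _, S, hS, rfl⟩ := hs
  convert! IsQuantifierFree.iUnion fun i => (hS i).isQuantifierFree_exists_snoc using 1
  ext x
  simp only [mem_iUnion, mem_ofPred_eq, exists_comm (α := ℤ)]

end Cells

section Atoms

variable {n : ℕ}

theorem affineMap_exists_eq_init_add_mul_last (t : (Fin (n + 1) → ℤ) →ᵃ[ℤ] ℤ) :
    ∃ (s : (Fin n → ℤ) →ᵃ[ℤ] ℤ) (b : ℤ), ∀ p, t p = s (Fin.init p) + b * p (Fin.last n) := by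
  let snocZero : (Fin n → ℤ) →ₗ[ℤ] (Fin (n + 1) → ℤ) :=
    LinearMap.pi (Fin.snoc (α := fun _ => (Fin n → ℤ) →ₗ[ℤ] ℤ) LinearMap.proj 0)
  refine ⟨t.comp snocZero.toAffineMap, t.linear (Pi.single (Fin.last n) 1), fun p => ?_⟩
  simp [affineMap_apply_eq_add_sum t (snocZero (Fin.init p)) p, Fin.sum_univ_castSucc, snocZero,
    Fin.init]

theorem isFiniteUnionOf_isCell_dvd {d : ℕ} (hd : 0 < d) (s : (Fin n → ℤ) →ᵃ[ℤ] ℤ) (b : ℤ) :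
    IsFiniteUnionOf IsCell
      {p : Fin (n + 1) → ℤ | (d : ℤ) ∣ s (Fin.init p) + b * p (Fin.last n)} := by
  have hset : {p : Fin (n + 1) → ℤ | (d : ℤ) ∣ s (Fin.init p) + b * p (Fin.last n)} =
      ⋃ c : Fin d, cell {x | (d : ℤ) ∣ s x + b * c} ⊥ ⊤ c d := by
    ext p
    have hcong (c : Fin d) (hc : (d : ℤ) ∣ p (Fin.last n) - c) :
        (d : ℤ) ∣ s (Fin.init p) + b * p (Fin.last n) ↔ (d : ℤ) ∣ s (Fin.init p) + b * c :=
      dvd_iff_dvd_of_dvd_sub (by simpa [mul_sub] using hc.mul_left b)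
    simp only [cell, mem_iUnion, mem_ofPred_eq, Pi.bot_apply, Pi.top_apply, bot_le, le_top,
      true_and]
    constructor
    · intro hp
      obtain ⟨c, hc⟩ := exists_fin_dvd_sub hd (p (Fin.last n))
      exact ⟨c, (hcong c hc).1 hp, hc⟩
    · rintro ⟨c, hp, hc⟩
      exact (hcong c hc).2 hp
  rw [hset]
  exact .iUnion fun c => .of ⟨_, _, _, _, _, .dvd (Int.natCast_pos.2 hd)
    (s + AffineMap.const ℤ _ (b * c)), .bot fun _ _ => rfl, .top fun _ _ => rfl, hd, rfl⟩

theorem isFiniteUnionOf_exists_dvd_and_ediv_eq {b : ℤ} (hb : 0 < b) (s : (Fin n → ℤ) →ᵃ[ℤ] ℤ) :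
    IsFiniteUnionOf (fun Y => IsQuantifierFree Y ∧
      ∃ L : (Fin n → ℤ) →ᵃ[ℤ] ℤ, ∀ x ∈ Y, b ∣ L x ∧ s x / b = L x / b) univ := by
  lift b to ℕ using hb.le
  have hb' := Int.natCast_pos.1 hb
  have hcover : ⋃ r : Fin b, {x | (b : ℤ) ∣ s x - r} = univ :=
    iUnion_eq_univ_iff.2 fun x => exists_fin_dvd_sub hb' (s x)
  rw [← hcover]
  refine .iUnion fun r => .of ⟨.dvd hb (s - AffineMap.const ℤ _ (r : ℤ)),
    s - AffineMap.const ℤ _ (r : ℤ), fun x hx => ⟨hx, ?_⟩⟩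
  change s x / b = (s x - r) / b
  obtain ⟨q, hq⟩ : (b : ℤ) ∣ s x - r := hx
  rw [hq, Int.mul_ediv_cancel_left _ hb.ne', sub_eq_iff_eq_add.1 hq, add_comm,
    Int.add_mul_ediv_left _ _ hb.ne', Int.ediv_eq_zero_of_lt (by omega) (by omega), zero_add]

theorem isFiniteUnionOf_isCell_mul_le {b : ℤ} (hb : 0 < b) (s : (Fin n → ℤ) →ᵃ[ℤ] ℤ) :
    IsFiniteUnionOf IsCell {p : Fin (n + 1) → ℤ | b * p (Fin.last n) ≤ s (Fin.init p)} := by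
  have hset : {p : Fin (n + 1) → ℤ | b * p (Fin.last n) ≤ s (Fin.init p)} =
      cell univ ⊥ (fun x => toZBar (s x / b)) 0 1 := by
    ext p
    simp [cell, toZBar_le_toZBar, Int.le_ediv_iff_mul_le hb, mul_comm]
  rw [hset]
  exact (isFiniteUnionOf_exists_dvd_and_ediv_eq hb s).cell fun Y ⟨hY, L, hL⟩ => ⟨Y, _, _, _, _, hY,
    .bot fun _ _ => rfl, .div hb L (fun x hx => (hL x hx).1)
      fun x hx => congrArg toZBar (hL x hx).2, one_pos, rfl⟩

theorem isFiniteUnionOf_isCell_neg_le_mul {b : ℤ} (hb : 0 < b) (s : (Fin n → ℤ) →ᵃ[ℤ] ℤ) :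
    IsFiniteUnionOf IsCell {p : Fin (n + 1) → ℤ | -s (Fin.init p) ≤ b * p (Fin.last n)} := by
  have hset : {p : Fin (n + 1) → ℤ | -s (Fin.init p) ≤ b * p (Fin.last n)} =
      cell univ (fun x => toZBar (-(s x / b))) ⊤ 0 1 := by
    ext p
    simp [cell, toZBar_le_toZBar, neg_le (b := p (Fin.last n)), Int.le_ediv_iff_mul_le hb,
      neg_le (b := b * _), mul_comm]
  rw [hset]
  exact (isFiniteUnionOf_exists_dvd_and_ediv_eq hb s).cell fun Y ⟨hY, L, hL⟩ => ⟨Y, _, _, _, _, hY,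
    .div hb (-L) (fun x hx => dvd_neg.2 (hL x hx).1)
      fun x hx => by rw [(hL x hx).2, ← Int.neg_ediv_of_dvd (hL x hx).1]; rfl,
    .top fun _ _ => rfl, one_pos, rfl⟩

theorem IsQuantifierFree.isFiniteUnionOf_isCell {s : Set (Fin (n + 1) → ℤ)}
    (hs : IsQuantifierFree s) : IsFiniteUnionOf IsCell s := by
  induction hs with
  | nonneg t =>
    obtain ⟨s, b, hst⟩ := affineMap_exists_eq_init_add_mul_last t
    simp only [hst]
    obtain hb | rfl | hb := lt_trichotomy b 0
    · simpa only [neg_mul, neg_le_iff_add_nonneg] using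
        isFiniteUnionOf_isCell_mul_le (neg_pos.2 hb) s
    · refine .of ⟨{x | 0 ≤ s x}, ⊥, ⊤, 0, 1, .nonneg s, .bot fun _ _ => rfl, .top fun _ _ => rfl,
        one_pos, ?_⟩
      simp [cell]
    · simpa only [neg_le_iff_add_nonneg'] using isFiniteUnionOf_isCell_neg_le_mul hb s
  | @dvd d hd t =>
    obtain ⟨s, b, hst⟩ := affineMap_exists_eq_init_add_mul_last t
    lift d to ℕ using hd.le
    simpa only [hst] using isFiniteUnionOf_isCell_dvd (Int.natCast_pos.1 hd) s b
  | inter _ _ ihs iht => exact ihs.inter iht fun _ _ => IsCell.inter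
  | union _ _ ihs iht => exact ihs.union iht

end Atoms

section QuantifierElimination

open FirstOrder.Language

theorem exists_affineMap_eq_realize_comp {α β : Type*} (σ : α → β)
    (t : (LangOrdGrp[[(univ : Set ℤ)]]).Term α) :
    ∃ s : (β → ℤ) →ᵃ[ℤ] ℤ, ∀ v, s v = t.realize (v ∘ σ) := by
  induction t with
  | var i => exact ⟨(LinearMap.proj (σ i)).toAffineMap, fun _ => rfl⟩
  | @func l f ts ih =>
    choose s hs using ih
    match l, f with
    | 0, .inl (.inl _) => exact ⟨0, fun _ => rfl⟩
    | 2, .inl (.inl _) => exact ⟨s 0 + s 1, fun v => congrArg₂ (· + ·) (hs 0 v) (hs 1 v)⟩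
    | 0, .inr c => exact ⟨AffineMap.const ℤ _ c.1, fun _ => rfl⟩

theorem isQuantifierFree_realize {k n : ℕ}
    (φ : (LangOrdGrp[[(univ : Set ℤ)]]).BoundedFormula (Fin k) n) :
    IsQuantifierFree {v : Fin (k + n) → ℤ | φ.Realize (v ∘ Fin.castAdd n) (v ∘ Fin.natAdd k)} := by
  induction φ with
  | falsum => exact .empty
  | @equal n t₁ t₂ =>
    obtain ⟨s₁, hs₁⟩ :=
      exists_affineMap_eq_realize_comp (Sum.elim (Fin.castAdd n) (Fin.natAdd k)) t₁
    obtain ⟨s₂, hs₂⟩ :=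
      exists_affineMap_eq_realize_comp (Sum.elim (Fin.castAdd n) (Fin.natAdd k)) t₂
    simpa only [hs₁, hs₂, Sum.comp_elim] using! IsQuantifierFree.eq s₁ s₂
  | @rel n l R ts =>
    choose s hs using fun i =>
      exists_affineMap_eq_realize_comp (Sum.elim (Fin.castAdd n) (Fin.natAdd k)) (ts i)
    match l, R with
    | 2, .inl (.inr .le) =>
      simpa only [hs, Sum.comp_elim] using! IsQuantifierFree.le (s 0) (s 1)
  | imp _ _ ihφ ihψ =>
    simpa only [BoundedFormula.realize_imp, imp_iff_not_or] using! ihφ.compl.union ihψ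
  | @all n φ ih =>
    let S : Set (Fin (k + n + 1) → ℤ) :=
      {w | φ.Realize (w ∘ Fin.castAdd (n + 1)) (w ∘ Fin.natAdd k)}
    have hsnoc (v : Fin (k + n) → ℤ) (y : ℤ) : (Fin.snoc v y : Fin (k + n + 1) → ℤ) ∈ S ↔
        φ.Realize (v ∘ Fin.castAdd n) (Fin.snoc (v ∘ Fin.natAdd k) y) := by
      simp only [S, mem_ofPred_eq, Fin.snoc_comp_castAdd, Fin.snoc_comp_natAdd]
    have hproj : IsQuantifierFree {v | ∃ y : ℤ, (Fin.snoc v y : Fin (k + n + 1) → ℤ) ∈ Sᶜ} :=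
      (IsQuantifierFree.compl ih).isFiniteUnionOf_isCell.isQuantifierFree_exists_snoc
    simpa only [BoundedFormula.realize_all, mem_compl_iff, hsnoc, compl_ofPred, not_exists,
      not_not] using hproj.compl

theorem IsPresburger.isQuantifierFree {n : ℕ} {A : Set (Fin n → ℤ)} (hA : IsPresburger A) :
    IsQuantifierFree A := by
  obtain ⟨φ, rfl⟩ := hA
  simpa only [Formula.Realize, Unique.eq_default] using! isQuantifierFree_realize φ

end QuantifierElimination

section Standardization

variable {n : ℕ} {X : Set (Fin n → ℤ)} {F G : (Fin n → ℤ) → ZBar}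

/-- On `X`, the function `F` agrees with a `ℤ`-linear function whose domain contains `X`. -/
def IsZLinearOn (F : (Fin n → ℤ) → ZBar) (X : Set (Fin n → ℤ)) : Prop :=
  ∃ (dom : Set (Fin n → ℤ)) (F' : (Fin n → ℤ) → ZBar), IsZLinear dom F' ∧ X ⊆ dom ∧
    EqOn F F' X

theorem IsZLinearOn.mono {Y : Set (Fin n → ℤ)} (hF : IsZLinearOn F X) (hYX : Y ⊆ X) :
    IsZLinearOn F Y := by
  obtain ⟨dom, F', hF', hX, hFF'⟩ := hF
  exact ⟨dom, F', hF', hYX.trans hX, hFF'.mono hYX⟩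

theorem affineMap_ediv_eq_add_sum (L : (Fin n → ℤ) →ᵃ[ℤ] ℤ) {N : ℤ} (hN : N ≠ 0)
    {c x : Fin n → ℤ} (hx : ∀ i, N ∣ x i - c i) :
    L x / N = L c / N + ∑ i, L.linear (Pi.single i 1) * ((x i - c i) / N) := by
  have hsum : ∑ i, L.linear (Pi.single i 1) * (x i - c i) =
      N * ∑ i, L.linear (Pi.single i 1) * ((x i - c i) / N) := by
    rw [Finset.mul_sum]
    exact Finset.sum_congr rfl fun i _ => by rw [mul_left_comm, Int.mul_ediv_cancel' (hx i)]
  rw [affineMap_apply_eq_add_sum L c x, hsum, Int.add_mul_ediv_left _ _ hN]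

theorem IsRatAffineOn.isFiniteUnionOf_isZLinearOn (hF : IsRatAffineOn F X)
    (hX : IsQuantifierFree X) :
    IsFiniteUnionOf (fun Y => IsQuantifierFree Y ∧ IsZLinearOn F Y) X := by
  cases hF with
  | bot hF =>
    exact .of ⟨hX, Set.univ, ⊥, .inl ⟨rfl, fun _ => rfl⟩, subset_univ X, hF⟩
  | top hF =>
    exact .of ⟨hX, Set.univ, ⊤, .inr (.inl ⟨rfl, fun _ => rfl⟩), subset_univ X, hF⟩
  | @div N hN L _ hF =>
    lift N to ℕ using hN.le
    have hcosets : X = ⋃ c : Fin n → Fin N, X ∩ {x | ∀ i, (N : ℤ) ∣ x i - c i} := by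
      rw [← inter_iUnion, iUnion_eq_univ_iff.2, inter_univ]
      intro x
      choose c hc using fun i => exists_fin_dvd_sub (Int.natCast_pos.1 hN) (x i)
      exact ⟨c, hc⟩
    rw [hcosets]
    refine .iUnion fun c => .of ⟨hX.inter ?_, {x | ∀ i, (N : ℤ) ∣ x i - c i}, _,
      .inr (.inr ⟨_, ⟨L (fun i => c i) / N, fun i => L.linear (Pi.single i 1), fun i => c i,
        fun _ => N, fun i => ⟨hN, Int.natCast_nonneg _, Int.ofNat_lt.2 (c i).2⟩, rfl,
        fun _ _ => rfl⟩, fun _ _ => rfl⟩),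
      inter_subset_right, fun x hx => ?_⟩
    · simp only [ofPred_forall]
      exact .iInter fun i =>
        .dvd hN ((LinearMap.proj i).toAffineMap - AffineMap.const ℤ _ (c i : ℤ))
    · rw [hF x hx.1, affineMap_ediv_eq_add_sum L hN.ne' hx.2]

/-- The sets in Cluckers' decomposition: cells with Presburger base, `ℤ`-linear bounds and reduced
residue `c < m`. -/
def IsStdCell (s : Set (Fin (n + 1) → ℤ)) : Prop :=
  ∃ (X df dg : Set (Fin n → ℤ)) (F G : (Fin n → ℤ) → ZBar) (c m : ℕ), (IsPresburger X ∧
    IsZLinear df F ∧ IsZLinear dg G ∧ X ⊆ df ∧ X ⊆ dg ∧ c < m) ∧ s = cell X F G c m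

theorem isStdCell_cell {c : ℤ} {m : ℕ} (hX : IsQuantifierFree X) (hF : IsZLinearOn F X)
    (hG : IsZLinearOn G X) (hm : 0 < m) : IsStdCell (cell X F G c m) := by
  obtain ⟨df, F', hF', hXf, hFF'⟩ := hF
  obtain ⟨dg, G', hG', hXg, hGG'⟩ := hG
  obtain ⟨r, hr⟩ := exists_fin_dvd_sub hm c
  refine ⟨X, df, dg, F', G', r, m, ⟨hX.definable, hF', hG', hXf, hXg, r.2⟩, ?_⟩
  ext p
  refine and_congr_right fun hp => ?_
  rw [hFF' hp, hGG' hp, ← sub_add_sub_cancel (p (Fin.last n)) c r, dvd_add_left hr]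

theorem IsCell.isFiniteUnionOf_isStdCell {s : Set (Fin (n + 1) → ℤ)} (hs : IsCell s) :
    IsFiniteUnionOf IsStdCell s := by
  obtain ⟨X, F, G, c, m, hX, hF, hG, hm, rfl⟩ := hs
  have hpieces := (hF.isFiniteUnionOf_isZLinearOn hX).inter (hG.isFiniteUnionOf_isZLinearOn hX)
    fun Y Z hY hZ => .of (P := fun W => IsQuantifierFree W ∧ IsZLinearOn F W ∧ IsZLinearOn G W)
      ⟨hY.1.inter hZ.1, hY.2.mono inter_subset_left, hZ.2.mono inter_subset_right⟩
  rw [inter_self] at hpieces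
  exact hpieces.cell fun Y ⟨hY, hFY, hGY⟩ => isStdCell_cell hY hFY hGY hm

end Standardization

/-- Cluckers' cell decomposition, corollary form: every Presburger subset of
`ℤⁿ⁺¹` is a finite union of sets `{(x̄,y) : x̄ ∈ Xₜ, fₜ(x̄) ≤ y ≤ gₜ(x̄), y ≡ cₜ (mod mₜ)}`. -/
theorem stmt17 {n : ℕ} (A : Set (Fin (n + 1) → ℤ)) (hA : IsPresburger A) :
    ∃ (k : ℕ) (X : Fin k → Set (Fin n → ℤ)) (df dg : Fin k → Set (Fin n → ℤ))
      (F G : Fin k → ((Fin n → ℤ) → ZBar)) (c m : Fin k → ℕ),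
      (∀ t, IsPresburger (X t) ∧ IsZLinear (df t) (F t) ∧ IsZLinear (dg t) (G t) ∧
        X t ⊆ df t ∧ X t ⊆ dg t ∧ c t < m t) ∧
      A = ⋃ t, {p : Fin (n + 1) → ℤ | Fin.init p ∈ X t ∧
        F t (Fin.init p) ≤ toZBar (p (Fin.last n)) ∧
        toZBar (p (Fin.last n)) ≤ G t (Fin.init p) ∧
        (m t : ℤ) ∣ (p (Fin.last n) - (c t : ℤ))} := by
  obtain ⟨k, S, hS, rfl⟩ := (hA.isQuantifierFree.isFiniteUnionOf_isCell.bind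
    fun _ => IsCell.isFiniteUnionOf_isStdCell).exists_fin
  choose X df dg F G c m hcell hSeq using hS
  exact ⟨k, X, df, dg, F, G, c, m, hcell, iUnion_congr hSeq⟩
end
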